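/- arXiv:2006.01330 — 2 statements merged into one kernel-verified Lean document; each statement's English description precedes it below -/
import Mathlib

section
/- Let A be a Noetherian ring satisfying Serre's condition (S₂). Then A is strictly closed in Ā if and only if A is a weakly Arf ring and A_P is an Arf ring for every prime ideal P of A with ht P = 1. -/
open scoped TensorProduct

/-- `A` is a *weakly Arf ring*: whenever `x, y, z ∈ A` with `x` a non-zerodivisor on `A`
and the fractions `y/x` and `z/x` in the total ring of fractions `Q(A)` are integral
over `A`, then `y * z ∈ x A`. -/
def IsWeaklyArfRing (A : Type*) [CommRing A] : Prop :=
  ∀ (x y z : A) (hx : x ∈ nonZeroDivisors A),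
    IsIntegral A (IsLocalization.mk' (FractionRing A) y
      (⟨x, hx⟩ : nonZeroDivisors A)) →
    IsIntegral A (IsLocalization.mk' (FractionRing A) z
      (⟨x, hx⟩ : nonZeroDivisors A)) →
    y * z ∈ Ideal.span {x}

/-- `a` belongs to the integral closure of the ideal `I`: it satisfies an equation
`a ^ n + c 1 * a ^ (n - 1) + ⋯ + c n = 0` with `c i ∈ I ^ i`, for some `n ≥ 1`. -/
def MemIdealIntegralClosure {A : Type*} [CommRing A] (I : Ideal A) (a : A) : Prop :=
  ∃ n : ℕ, 0 < n ∧ ∃ c : ℕ → A,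
    (∀ i ∈ Finset.Icc 1 n, c i ∈ I ^ i) ∧
    a ^ n + ∑ i ∈ Finset.Icc 1 n, c i * a ^ (n - i) = 0

/-- The integral closure `Ī` of an ideal `I` of `A`, as a subset of `A`. -/
def idealIntegralClosure {A : Type*} [CommRing A] (I : Ideal A) : Set A :=
  {a | MemIdealIntegralClosure I a}

/-- An ideal `I` is integrally closed if `Ī = I`. -/
def Ideal.IsIntegrallyClosedIdeal {A : Type*} [CommRing A] (I : Ideal A) : Prop :=
  idealIntegralClosure I = (I : Set A)

/-- `A` is an *Arf ring*: (1) every integrally closed ideal of `A` containing a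
non-zerodivisor has a principal reduction, i.e. `I ^ (n + 1) = a * I ^ n` for some
`n ≥ 0` and `a ∈ I`; and (2) whenever `x, y, z ∈ A` with `x` a non-zerodivisor and
`y/x, z/x` integral over `A` in `Q(A)`, then `y * z ∈ x A`. -/
def IsArfRing (A : Type*) [CommRing A] : Prop :=
  (∀ I : Ideal A, Ideal.IsIntegrallyClosedIdeal I →
      (∃ x ∈ I, x ∈ nonZeroDivisors A) →
      ∃ (n : ℕ) (a : A), a ∈ I ∧ I ^ (n + 1) = Ideal.span {a} * I ^ n) ∧
  IsWeaklyArfRing A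

set_option synthInstance.maxHeartbeats 1000000 in
set_option maxHeartbeats 2000000 in
/-- The strict closure `A*` of `A` in the integral closure `Ā` of `A` in its total ring
of fractions `Q(A)`: the set of `x ∈ Ā` such that `x ⊗ 1 = 1 ⊗ x` in `Ā ⊗_A Ā`. -/
def strictClosureSet (A : Type*) [CommRing A] : Set (FractionRing A) :=
  {x | ∃ hx : x ∈ integralClosure A (FractionRing A),
    ((⟨x, hx⟩ : integralClosure A (FractionRing A)) ⊗ₜ[A]
        (1 : integralClosure A (FractionRing A)) :
      TensorProduct A (integralClosure A (FractionRing A))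
        (integralClosure A (FractionRing A))) =
    (1 : integralClosure A (FractionRing A)) ⊗ₜ[A]
        (⟨x, hx⟩ : integralClosure A (FractionRing A))}

/-- `A` is strictly closed in `Ā`, i.e. `A = A*`. -/
def IsStrictlyClosed (A : Type*) [CommRing A] : Prop :=
  ∀ x ∈ strictClosureSet A, ∃ a : A, algebraMap A (FractionRing A) a = x

/-- `xs` is a regular sequence on `R`: for each `i`, the element `xs i` acts injectively
on `R / (xs 0, …, xs (i-1))`. -/
def IsRegularSeq (R : Type*) [CommRing R] (xs : List R) : Prop :=
  ∀ (i : ℕ) (h : i < xs.length),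
    IsSMulRegular (R ⧸ Ideal.span {y : R | y ∈ xs.take i}) (xs.get ⟨i, h⟩)

/-- For a Noetherian local ring `R`, `depth R ≥ n` holds iff there is a regular sequence
of length `n` consisting of elements of the maximal ideal. -/
def RingDepthGE (R : Type*) [CommRing R] [IsLocalRing R] (n : ℕ) : Prop :=
  ∃ xs : List R, xs.length = n ∧ (∀ x ∈ xs, x ∈ IsLocalRing.maximalIdeal R) ∧
    IsRegularSeq R xs

/-- Serre's condition `(S_n)`: `depth A_P ≥ min (n, dim A_P)` for every prime ideal `P`
of `A`. -/
def SerreSCondition (A : Type*) [CommRing A] (n : ℕ) : Prop :=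
  ∀ (P : Ideal A) [P.IsPrime], ∀ k : ℕ, k ≤ n →
    (k : WithBot (WithTop ℕ)) ≤ ringKrullDim (Localization.AtPrime P) →
    RingDepthGE (Localization.AtPrime P) k

/-! By `(S₂)`, the associated primes of `A / sA` have height one for every non-zerodivisor `s`, so
whether an element of `Q(A)` lies in `A` can be checked at the height-one primes, and one is reduced
to a Noetherian local ring `R` of dimension one.

*Arf implies strictly closed.* Let `R ⊆ B ⊆ D ⊆ Q(R)` be finite over `R`, with `B = a⁻¹ I` for an
integrally closed ideal `I`. By the Arf property every maximal ideal `J` of `B` containing a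
non-zerodivisor of `R` satisfies `J ^ 2 = b J` for some `b ∈ J`. An element of the strict closure of
`B` in `D` has the form `r + b w`, with `r ∈ B` and `w` in the strict closure of the blow-up
`b⁻¹ J` in `b⁻¹ (J D)`. The blow-up has the same form as `B`, and the length of the quotient drops
if `J` contains the conductor of `D`, so induction applies.

*Strictly closed implies Arf.* Let `a`, `y` lie in an integrally closed ideal `I`, with `a` a
non-zerodivisor, and put `q = y / a`. In dimension one `q` is a root of a polynomial with some
coefficient `1`, which yields `u`, `v` with `u`, `qu`, `v`, `qv` integral over `R` and
`u + qv = 1`. Let `C` be a finite extension of `R` containing them, and `K` the ideal of those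
`k ∈ C` with `qk ∈ C`. Modulo a conductor element, a power of `K` is generated by an idempotent `ε`,
and `aε`, `yε` belong to the strict closure of `R` in `C`, hence to `R`. Thus
`a' = aε + y(1 - ε)` belongs to `I`, and locally on `C` it is `a` or `y` up to a unit, whichever
divides the other, so that `a` and `y` are both integral over `a' R`. -/

open Polynomial nonZeroDivisors

section PrincipalClosure

variable {R : Type*} [CommRing R]

/-- The contraction `a R̄ ∩ R` of the principal ideal `a R̄`, where `R̄` is the integral closure of
`R` in its total ring of fractions. For a non-zerodivisor `a` it consists of the `y` such that
`y / a` is integral over `R`, i.e. it is the integral closure of the ideal `a R`. -/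
def principalClosure (a : R) : Ideal R :=
  (Ideal.span {algebraMap R (integralClosure R (FractionRing R)) a}).comap
    (algebraMap R (integralClosure R (FractionRing R)))

theorem mem_principalClosure_iff {a y : R} :
    y ∈ principalClosure a ↔ ∃ q : FractionRing R, IsIntegral R q ∧
      algebraMap R (FractionRing R) y = algebraMap R (FractionRing R) a * q := by
  simp only [principalClosure, Ideal.mem_comap, Ideal.mem_span_singleton, dvd_def, Subtype.exists,
    Subtype.ext_iff, mem_integralClosure_iff]
  exact ⟨fun ⟨q, hq, h⟩ => ⟨q, hq, h⟩, fun ⟨q, hq, h⟩ => ⟨q, hq, h⟩⟩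

theorem principalClosure_le_of_mem {a b : R} (h : a ∈ principalClosure b) :
    principalClosure a ≤ principalClosure b :=
  Ideal.comap_mono ((Ideal.span_singleton_le_iff_mem _).2 h)

theorem isIntegral_mk'_iff_mem_principalClosure {a y : R} (ha : a ∈ R⁰) :
    IsIntegral R (IsLocalization.mk' (FractionRing R) y (⟨a, ha⟩ : R⁰)) ↔
      y ∈ principalClosure a := by
  rw [mem_principalClosure_iff]
  refine ⟨fun h => ⟨_, h, (IsLocalization.mk'_spec' _ y (⟨a, ha⟩ : R⁰)).symm⟩, ?_⟩
  rintro ⟨q, hq, h⟩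
  rwa [(IsLocalization.mk'_eq_iff_eq_mul (S := FractionRing R)).2 (h.trans (mul_comm _ _))]

theorem isWeaklyArfRing_iff :
    IsWeaklyArfRing R ↔
      ∀ a ∈ R⁰, principalClosure a * principalClosure a ≤ Ideal.span {a} := by
  simp only [IsWeaklyArfRing, isIntegral_mk'_iff_mem_principalClosure, Ideal.mul_le]
  exact ⟨fun h a ha y hy z hz => h a y z ha hy hz, fun h a y z ha hy hz => h a ha y hy z hz⟩

theorem mem_nonZeroDivisors_of_isUnit_algebraMap {a : R}
    (h : IsUnit (algebraMap R (FractionRing R) a)) : a ∈ R⁰ :=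
  mem_nonZeroDivisors_of_injective (IsFractionRing.injective R (FractionRing R))
    h.mem_nonZeroDivisors

theorem memIdealIntegralClosure_of_eval_eq_zero {I : Ideal R} {y : R} {p : R[X]} (hp : p.Monic)
    (hI : ∀ i, p.coeff i ∈ I ^ (p.natDegree - i)) (hy : p.eval y = 0) :
    MemIdealIntegralClosure I y := by
  rcases Nat.eq_zero_or_pos p.natDegree with hd | hd
  · have h10 : (1 : R) = 0 := by rw [← hy, hp.natDegree_eq_zero.1 hd, eval_one]
    exact ⟨1, one_pos, 0, by simp, by rw [← one_mul (_ + _), h10, zero_mul]⟩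
  refine ⟨p.natDegree, hd, fun i => p.coeff (p.natDegree - i), fun i hi => ?_, ?_⟩
  · simpa [Nat.sub_sub_self (Finset.mem_Icc.1 hi).2] using hI (p.natDegree - i)
  · rw [eval_eq_sum_range, Finset.sum_range_succ, hp.coeff_natDegree, one_mul, add_comm] at hy
    rw [← hy]
    congr 1
    exact Finset.sum_nbij' (p.natDegree - ·) (p.natDegree - ·) (by grind) (by grind) (by grind)
      (by grind) fun _ _ => rfl

theorem memIdealIntegralClosure_of_mem_principalClosure {I : Ideal R} {a y : R} (ha : a ∈ I)
    (hy : y ∈ principalClosure a) : MemIdealIntegralClosure I y := by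
  obtain ⟨q, ⟨p, hp, hpq⟩, hyq⟩ := mem_principalClosure_iff.1 hy
  have hroot : (p.scaleRoots a).eval y = 0 := by
    apply IsFractionRing.injective R (FractionRing R)
    rw [← eval₂_at_apply, hyq, map_zero, scaleRoots_eval₂_mul, hpq, mul_zero]
  refine memIdealIntegralClosure_of_eval_eq_zero ((monic_scaleRoots_iff a).2 hp) (fun i => ?_) hroot
  rw [coeff_scaleRoots, natDegree_scaleRoots]
  exact Ideal.mul_mem_left _ _ (Ideal.pow_mem_pow ha _)

theorem principalClosure_le_of_isIntegrallyClosedIdeal {I : Ideal R}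
    (hI : I.IsIntegrallyClosedIdeal) {a : R} (ha : a ∈ I) : principalClosure a ≤ I := fun _ hy =>
  hI.subset (memIdealIntegralClosure_of_mem_principalClosure ha hy)

theorem IsWeaklyArfRing.mul_self_eq (hR : IsWeaklyArfRing R) {I : Ideal R}
    (hI : I.IsIntegrallyClosedIdeal) {a : R} (ha : a ∈ I) (ha₀ : a ∈ R⁰)
    (hIa : I ≤ principalClosure a) : I * I = Ideal.span {a} * I := by
  refine le_antisymm (Ideal.mul_le.2 fun y hy z hz => ?_)
    (Ideal.mul_mono_left ((Ideal.span_singleton_le_iff_mem I).2 ha))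
  obtain ⟨u, hu⟩ := Ideal.mem_span_singleton.1
    (isWeaklyArfRing_iff.1 hR a ha₀ (Ideal.mul_mem_mul (hIa hy) (hIa hz)))
  obtain ⟨q, hq, hyq⟩ := mem_principalClosure_iff.1 (hIa hy)
  obtain ⟨r, hr, hzr⟩ := mem_principalClosure_iff.1 (hIa hz)
  have hua : u ∈ principalClosure a := by
    refine mem_principalClosure_iff.2 ⟨q * r, hq.mul hr, ?_⟩
    refine (IsLocalization.map_units (FractionRing R) (⟨a, ha₀⟩ : R⁰)).mul_left_cancel ?_
    rw [← map_mul, ← hu, map_mul, hyq, hzr]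
    ring
  rw [hu]
  exact Ideal.mul_mem_mul (Ideal.mem_span_singleton_self a)
    (principalClosure_le_of_isIntegrallyClosedIdeal hI ha hua)

theorem isIntegral_of_forall_mul_mem [IsNoetherianRing R] {S : Type*} [CommRing S] [Algebra R S]
    {N : Submodule R S} (hN : N.FG) {u : S} (hu : u ∈ N) (hu₀ : u ∈ S⁰) {q : S}
    (hq : ∀ y ∈ N, q * y ∈ N) : IsIntegral R q := by
  have hadjoin : ∀ x ∈ Algebra.adjoin R {q}, ∀ y ∈ N, x * y ∈ N := by
    intro x hx
    induction hx using Algebra.adjoin_induction with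
    | mem x hx => rwa [Set.mem_singleton_iff.1 hx]
    | algebraMap r => exact fun y hy => by simpa [Algebra.smul_def] using N.smul_mem r hy
    | add x x' _ _ hx hx' => exact fun y hy => add_mul x x' y ▸ N.add_mem (hx y hy) (hx' y hy)
    | mul x x' _ _ hx hx' => exact fun y hy => mul_assoc x x' y ▸ hx _ (hx' y hy)
  have hfg : (Algebra.adjoin R {q}).toSubmodule.FG := by
    refine Submodule.fg_of_fg_map_injective (LinearMap.mulRight R u)
      (fun x y h => (mul_cancel_right_mem_nonZeroDivisors hu₀).1 h) (hN.of_le ?_)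
    rintro _ ⟨x, hx, rfl⟩
    exact hadjoin x hx u hu
  exact IsIntegral.of_mem_of_fg _ hfg q (Algebra.self_mem_adjoin_singleton R q)

theorem mem_nonZeroDivisors_of_pow_succ_eq {I : Ideal R} (hI : ∃ x ∈ I, x ∈ R⁰) {a : R} {n : ℕ}
    (h : I ^ (n + 1) = Ideal.span {a} * I ^ n) : a ∈ R⁰ := by
  obtain ⟨x, hx, hx₀⟩ := hI
  obtain ⟨z, -, hz⟩ := Ideal.mem_span_singleton_mul.1 (h ▸ Ideal.pow_mem_pow hx (n + 1))
  exact (mul_mem_nonZeroDivisors.1 (hz ▸ pow_mem hx₀ (n + 1))).1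

theorem le_principalClosure_of_pow_succ_eq [IsNoetherianRing R] {I : Ideal R}
    (hI : ∃ x ∈ I, x ∈ R⁰) {a : R} {n : ℕ} (h : I ^ (n + 1) = Ideal.span {a} * I ^ n) :
    I ≤ principalClosure a := by
  intro y hy
  have ha := mem_nonZeroDivisors_of_pow_succ_eq hI h
  obtain ⟨x, hx, hx₀⟩ := hI
  refine (isIntegral_mk'_iff_mem_principalClosure ha).1 ?_
  set q := IsLocalization.mk' (FractionRing R) y (⟨a, ha⟩ : R⁰)
  refine isIntegral_of_forall_mul_mem
    (N := Submodule.map (Algebra.linearMap R (FractionRing R)) (I ^ n))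
    ((IsNoetherian.noetherian (I ^ n)).map _) (Submodule.mem_map_of_mem (Ideal.pow_mem_pow hx n))
    (IsLocalization.map_units (FractionRing R) (⟨x ^ n, pow_mem hx₀ n⟩ : R⁰)).mem_nonZeroDivisors ?_
  rintro _ ⟨v, hv, rfl⟩
  obtain ⟨w, hw, hwv⟩ := Ideal.mem_span_singleton_mul.1
    (h ▸ pow_succ' I n ▸ Ideal.mul_mem_mul hy hv)
  refine ⟨w, hw, (IsLocalization.map_units (FractionRing R) (⟨a, ha⟩ : R⁰)).mul_left_cancel ?_⟩
  have hqa : algebraMap R (FractionRing R) a * q = algebraMap R (FractionRing R) y :=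
    IsLocalization.mk'_spec' _ y (⟨a, ha⟩ : R⁰)
  simp only [Algebra.linearMap_apply, ← mul_assoc, hqa]
  rw [← map_mul, hwv, map_mul]

theorem isArfRing_iff [IsNoetherianRing R] :
    IsArfRing R ↔ IsWeaklyArfRing R ∧ ∀ I : Ideal R, I.IsIntegrallyClosedIdeal →
      (∃ x ∈ I, x ∈ R⁰) → ∃ a ∈ I, a ∈ R⁰ ∧ I ≤ principalClosure a := by
  refine ⟨fun ⟨hred, hw⟩ => ⟨hw, fun I hI hI₀ => ?_⟩, fun ⟨hw, hred⟩ => ⟨fun I hI hI₀ => ?_, hw⟩⟩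
  · obtain ⟨n, a, ha, h⟩ := hred I hI hI₀
    exact ⟨a, ha, mem_nonZeroDivisors_of_pow_succ_eq hI₀ h,
      le_principalClosure_of_pow_succ_eq hI₀ h⟩
  · obtain ⟨a, ha, ha₀, hIa⟩ := hred I hI hI₀
    exact ⟨1, a, ha, by rw [pow_one, pow_two, hw.mul_self_eq hI ha ha₀ hIa]⟩

end PrincipalClosure

section StrictClosure

variable (R S : Type*) [CommRing R] [CommRing S] [Algebra R S]

/-- The strict closure of `R` in an `R`-algebra `S`: the elements `x` of `S` with
`x ⊗ 1 = 1 ⊗ x` in `S ⊗[R] S`. -/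
def strictClosure : Subalgebra R S :=
  AlgHom.equalizer (Algebra.TensorProduct.includeLeft : S →ₐ[R] S ⊗[R] S)
    Algebra.TensorProduct.includeRight

variable {R S}

theorem mem_strictClosure_iff {x : S} :
    x ∈ strictClosure R S ↔ x ⊗ₜ[R] (1 : S) = (1 : S) ⊗ₜ[R] x :=
  Iff.rfl

theorem map_mem_strictClosure {S' : Type*} [CommRing S'] [Algebra R S'] (f : S →ₐ[R] S') {x : S}
    (hx : x ∈ strictClosure R S) : f x ∈ strictClosure R S' := by
  simpa [mem_strictClosure_iff] using
    congrArg (Algebra.TensorProduct.map f f) (mem_strictClosure_iff.1 hx)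

theorem strictClosure_le_restrictScalars (R' : Type*) [CommRing R'] [Algebra R R'] [Algebra R' S]
    [IsScalarTower R R' S] :
    strictClosure R S ≤ (strictClosure R' S).restrictScalars R := fun _ hx =>
  congrArg (TensorProduct.mapOfCompatibleSMul R' R R S S) (mem_strictClosure_iff.1 hx)

theorem exists_fg_mem_strictClosure {x : S} (hx : x ∈ strictClosure R S) :
    ∃ (T : Subalgebra R S) (hxT : x ∈ T), T.FG ∧ (⟨x, hxT⟩ : T) ∈ strictClosure R T := by
  have hX : (Algebra.adjoin R {x}).FG := ⟨{x}, by simp⟩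
  have hxX : x ∈ Algebra.adjoin R {x} := Algebra.self_mem_adjoin_singleton R x
  obtain ⟨T₁, hXT₁, hT₁, h₁⟩ := TensorProduct.Algebra.eq_of_fg_of_subtype_eq (N := S) hX
    (t := (⟨x, hxX⟩ : Algebra.adjoin R {x}) ⊗ₜ[R] (1 : S)) (t' := 1 ⊗ₜ[R] x)
    (by simpa using mem_strictClosure_iff.1 hx)
  obtain ⟨T₂, hXT₂, hT₂, h₂⟩ := TensorProduct.Algebra.eq_of_fg_of_subtype_eq (N := T₁) hX
    (t := 1 ⊗ₜ[R] Subalgebra.inclusion hXT₁ ⟨x, hxX⟩)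
    (t' := (⟨x, hxX⟩ : Algebra.adjoin R {x}) ⊗ₜ[R] (1 : T₁))
    (by simpa using congrArg (TensorProduct.comm R T₁ S) h₁)
  refine ⟨T₁ ⊔ T₂, (le_sup_left : T₁ ≤ T₁ ⊔ T₂) (hXT₁ hxX), hT₁.sup hT₂, ?_⟩
  simpa [mem_strictClosure_iff, eq_comm] using congrArg (Algebra.TensorProduct.map
    (Subalgebra.inclusion (le_sup_right : T₂ ≤ T₁ ⊔ T₂))
    (Subalgebra.inclusion (le_sup_left : T₁ ≤ T₁ ⊔ T₂))) h₂

theorem smul_mul_mem_strictClosure {a y z : R} {p q : S} (hp : a • p = algebraMap R S y)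
    (hq : a • q = algebraMap R S z) : a • (p * q) ∈ strictClosure R S := by
  have hz : a • (p * q) = z • p := by
    rw [← mul_smul_comm, hq, mul_comm, Algebra.smul_def]
  have hy : a • (p * q) = y • q := by
    rw [← smul_mul_assoc, hp, Algebra.smul_def]
  rw [mem_strictClosure_iff]
  calc (a • (p * q)) ⊗ₜ[R] (1 : S) = p ⊗ₜ[R] algebraMap R S z := by
        rw [hz, TensorProduct.smul_tmul, Algebra.algebraMap_eq_smul_one]
    _ = algebraMap R S y ⊗ₜ[R] q := by
        rw [← hq, ← TensorProduct.smul_tmul, hp]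
    _ = 1 ⊗ₜ[R] (a • (p * q)) := by
        rw [hy, Algebra.algebraMap_eq_smul_one, TensorProduct.smul_tmul]

theorem strictClosure_eq_bot_of_retraction {f : S →ₗ[R] R} (hf : f 1 = 1) :
    strictClosure R S = ⊥ := by
  refine eq_bot_iff.2 fun x hx => Algebra.mem_bot.2 ⟨f x, ?_⟩
  have h := congrArg (TensorProduct.lid R S ∘ f.rTensor S) (mem_strictClosure_iff.1 hx)
  simpa [hf, Algebra.algebraMap_eq_smul_one] using h

theorem strictClosure_eq_bot_of_field (K E : Type*) [Field K] [CommRing E] [Algebra K E] :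
    strictClosure K E = ⊥ := by
  cases subsingleton_or_nontrivial E
  · exact Subsingleton.elim _ _
  · obtain ⟨f, hf⟩ := (Algebra.linearMap K E).exists_leftInverse_of_injective
      (LinearMap.ker_eq_bot.2 (algebraMap K E).injective)
    exact strictClosure_eq_bot_of_retraction (f := f) (by simpa using LinearMap.congr_fun hf 1)

theorem exists_sub_mem_map_of_mem_strictClosure {x : S} (hx : x ∈ strictClosure R S) (n : Ideal R)
    [n.IsMaximal] : ∃ r : R, x - algebraMap R S r ∈ n.map (algebraMap R S) := by
  let := Ideal.Quotient.field n
  have hx' := strictClosure_le_restrictScalars (R ⧸ n)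
    (map_mem_strictClosure (Ideal.Quotient.mkₐ R (n.map (algebraMap R S))) hx)
  rw [Subalgebra.mem_restrictScalars, strictClosure_eq_bot_of_field] at hx'
  obtain ⟨c, hc⟩ := Algebra.mem_bot.1 hx'
  obtain ⟨r, rfl⟩ := Ideal.Quotient.mk_surjective c
  exact ⟨r, Ideal.Quotient.eq.1 hc.symm⟩

theorem isStrictlyClosed_iff :
    IsStrictlyClosed R ↔ strictClosure R (integralClosure R (FractionRing R)) = ⊥ := by
  rw [eq_bot_iff]
  constructor
  · intro h x hx
    obtain ⟨r, hr⟩ := h x ⟨x.2, hx⟩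
    exact Algebra.mem_bot.2 ⟨r, Subtype.ext hr⟩
  · rintro h x ⟨hxi, hx⟩
    obtain ⟨r, hr⟩ := Algebra.mem_bot.1 (h hx)
    exact ⟨r, congrArg Subtype.val hr⟩

theorem IsStrictlyClosed.isWeaklyArfRing (hR : IsStrictlyClosed R) : IsWeaklyArfRing R := by
  refine isWeaklyArfRing_iff.2 fun a _ => Ideal.mul_le.2 fun y hy z hz => ?_
  obtain ⟨p, hp⟩ := Ideal.mem_span_singleton.1 hy
  obtain ⟨q, hq⟩ := Ideal.mem_span_singleton.1 hz
  obtain ⟨r, hr⟩ := Algebra.mem_bot.1 (isStrictlyClosed_iff.1 hR ▸ smul_mul_mem_strictClosure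
    ((Algebra.smul_def _ _).trans hp.symm) ((Algebra.smul_def _ _).trans hq.symm))
  refine Ideal.mem_span_singleton.2 ⟨r, ?_⟩
  have hinj : Function.Injective (algebraMap R (integralClosure R (FractionRing R))) := fun _ _ h =>
    IsFractionRing.injective R (FractionRing R) (congrArg Subtype.val h)
  apply hinj
  rw [map_mul, map_mul, hr, hp, hq, Algebra.smul_def]
  ring

end StrictClosure

section BlowUpDescent

theorem exists_basis_mod_of_isMaximal {B M : Type*} [CommRing B] [AddCommGroup M] [Module B M]
    [Module.Finite B M] (n : Ideal B) [n.IsMaximal] {N : Submodule B M} (hN : n • ⊤ ≤ N) :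
    ∃ (d : ℕ) (e : Fin d → M), (∀ m, ∃ c : Fin d → B, m - ∑ i, c i • e i ∈ N) ∧
      ∀ c : Fin d → B, ∑ i, c i • e i ∈ N → ∀ i, c i ∈ n := by
  let := Ideal.Quotient.field n
  have htors : Module.IsTorsionBySet B (M ⧸ N) n := fun x r => by
    obtain ⟨m, rfl⟩ := N.mkQ_surjective x
    rw [← map_smul]
    exact (Submodule.Quotient.mk_eq_zero N).2 (hN (Submodule.smul_mem_smul r.2 trivial))
  let := htors.module
  have : IsScalarTower B (B ⧸ n) (M ⧸ N) := htors.isScalarTower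
  have : Module.Finite (B ⧸ n) (M ⧸ N) := .of_restrictScalars_finite B _ _
  let v := Module.finBasis (B ⧸ n) (M ⧸ N)
  choose e he using fun i => N.mkQ_surjective (v i)
  have hsum (c : Fin _ → B) : N.mkQ (∑ i, c i • e i) = ∑ i, Ideal.Quotient.mk n (c i) • v i := by
    simp only [map_sum, map_smul, he]
    rfl
  refine ⟨_, e, fun m => ?_, fun c hc i => ?_⟩
  · choose c hc using fun i => Ideal.Quotient.mk_surjective (v.repr (N.mkQ m) i)
    refine ⟨c, (Submodule.Quotient.eq N).1 ((v.sum_repr (N.mkQ m)).symm.trans ?_)⟩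
    simp_rw [← hc]
    exact (hsum c).symm
  · have hc₀ := (hsum c).symm.trans ((Submodule.Quotient.mk_eq_zero N).2 hc)
    exact Ideal.Quotient.eq_zero_iff_mem.1
      (Fintype.linearIndependent_iff.1 v.linearIndependent _ hc₀ i)

theorem exists_eq_sum_tmul_of_span_eq_top {ι B M N : Type*} [Fintype ι] [CommRing B]
    [AddCommGroup M] [Module B M] [AddCommGroup N] [Module B N] {g : ι → M}
    (hg : Submodule.span B (Set.range g) = ⊤) (z : M ⊗[B] N) :
    ∃ v : ι → N, z = ∑ i, g i ⊗ₜ v i := by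
  induction z with
  | zero => exact ⟨0, by simp⟩
  | tmul m y =>
    obtain ⟨c, rfl⟩ :=
      (Submodule.mem_span_range_iff_exists_fun B).1 (hg ▸ Submodule.mem_top (x := m))
    exact ⟨fun i => c i • y, by simp [TensorProduct.sum_tmul, TensorProduct.smul_tmul]⟩
  | add z₁ z₂ h₁ h₂ =>
    obtain ⟨v₁, rfl⟩ := h₁
    obtain ⟨v₂, rfl⟩ := h₂
    exact ⟨v₁ + v₂, by simp [TensorProduct.tmul_add, Finset.sum_add_distrib]⟩

theorem span_range_sumElim_smul_eq_top {ι κ B M : Type*} [Fintype ι] [Finite κ] [CommRing B]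
    [AddCommGroup M] [Module B M] {g : κ → M} {e : ι → M} {b : B}
    (hg : Submodule.span B (Set.range g) = ⊤)
    (he : ∀ m, ∃ c : ι → B, m - ∑ i, c i • e i ∈ LinearMap.range (LinearMap.lsmul B M b)) :
    Submodule.span B (Set.range (Sum.elim (fun k => b • g k) e)) = ⊤ := by
  cases nonempty_fintype κ
  refine eq_top_iff.2 fun m _ => ?_
  obtain ⟨c, m', hm'⟩ := he m
  obtain ⟨r, rfl⟩ := (Submodule.mem_span_range_iff_exists_fun B).1
    (hg ▸ Submodule.mem_top (x := m'))
  refine (Submodule.mem_span_range_iff_exists_fun B).2 ⟨Sum.elim r c, ?_⟩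
  rw [Fintype.sum_sum_type, ← eq_sub_iff_add_eq]
  simpa [Finset.smul_sum, smul_comm b] using hm'

variable {B B' : Type*} [CommRing B] [CommRing B'] [Algebra B B']

theorem sum_tmul_eq_zero_of_sum_smul_eq {ι κ σ M N : Type*} [Fintype ι] [Fintype κ] [Fintype σ]
    [AddCommGroup M] [Module B M] [Module B' M] [IsScalarTower B B' M] [AddCommGroup N] [Module B N]
    [Module B' N] [IsScalarTower B B' N] {g : κ → M} {e : ι → M} {v : κ → N} {y : σ → N}
    {a : κ → σ → B} {β : ι → σ → B'} (hv : ∀ k, v k = ∑ j, a k j • y j)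
    (hg : ∀ j, ∑ k, a k j • g k = -∑ i, β i j • e i) (hy : ∀ i, ∑ j, β i j • y j = 0) :
    ∑ k, g k ⊗ₜ[B'] v k = 0 :=
  calc ∑ k, g k ⊗ₜ[B'] v k = ∑ j, (∑ k, a k j • g k) ⊗ₜ[B'] y j := by
        simp only [hv, TensorProduct.tmul_sum, TensorProduct.sum_tmul, TensorProduct.smul_tmul]
        exact Finset.sum_comm
    _ = -∑ i, e i ⊗ₜ[B'] ∑ j, β i j • y j := by
        simp only [hg, TensorProduct.neg_tmul, TensorProduct.sum_tmul, TensorProduct.smul_tmul,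
          TensorProduct.tmul_sum, Finset.sum_neg_distrib]
        rw [Finset.sum_comm]
    _ = 0 := by simp [hy]

/- Expand `z` along generators `g` of `M`, and `b • z` along the generators `b • g` and a lift `e`
of a basis of `M / b M` over `B / n`. In a relation between the latter the coefficients of `e` lie
in `n`, hence become divisible by `b` over `B'`, where the relation can be divided by `b`. -/
theorem mapOfCompatibleSMul_eq_zero_of_smul_eq_zero {M N : Type*} [AddCommGroup M] [Module B M]
    [Module B' M] [IsScalarTower B B' M] [AddCommGroup N] [Module B N] [Module B' N]
    [IsScalarTower B B' N] [Module.Finite B M] (n : Ideal B) [n.IsMaximal] {b : B}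
    (hM : IsSMulRegular M b) (hN : IsSMulRegular N b)
    (hn : n.map (algebraMap B B') ≤ Ideal.span {algebraMap B B' b}) {z : M ⊗[B] N}
    (hz : b • z = 0) : TensorProduct.mapOfCompatibleSMul B' B B M N z = 0 := by
  have hdiv (c : B) (hc : c ∈ n) : ∃ β : B', algebraMap B B' c = algebraMap B B' b * β :=
    Ideal.mem_span_singleton.1 (hn (Ideal.mem_map_of_mem _ hc))
  obtain ⟨d, e, hspan, hind⟩ := exists_basis_mod_of_isMaximal (M := M) n
    (N := LinearMap.range (LinearMap.lsmul B M b)) (Submodule.smul_le.2 fun c hc m _ => by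
      obtain ⟨β, hβ⟩ := hdiv c hc
      exact ⟨β • m, by simp [← algebraMap_smul B' c, hβ, mul_smul, algebraMap_smul]⟩)
  obtain ⟨l, g, hg⟩ := Module.Finite.exists_fin (R := B) (M := M)
  obtain ⟨v, rfl⟩ := exists_eq_sum_tmul_of_span_eq_top hg z
  obtain ⟨J, a, y, hv, ha⟩ := TensorProduct.vanishesTrivially_of_sum_tmul_eq_zero B
    (span_range_sumElim_smul_eq_top hg hspan) (n := Sum.elim v (0 : Fin d → N))
    (by simpa [Finset.smul_sum, TensorProduct.smul_tmul'] using hz)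
  simp only [Sum.forall, Sum.elim_inl, Sum.elim_inr, Fintype.sum_sum_type, Pi.zero_apply,
    smul_comm _ b, ← Finset.smul_sum] at hv ha
  obtain ⟨hv, h0⟩ := hv
  have hmem (i j) : a (Sum.inr i) j ∈ n :=
    hind (fun i => a (Sum.inr i) j)
      ⟨-∑ k, a (Sum.inl k) j • g k, by simpa using (eq_neg_of_add_eq_zero_right (ha j)).symm⟩ i
  choose β hβ using fun i j => hdiv _ (hmem i j)
  have he (i j) : a (Sum.inr i) j • e i = b • β i j • e i := by
    rw [← algebraMap_smul B', hβ, mul_smul, algebraMap_smul]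
  have hy (i j) : a (Sum.inr i) j • y j = b • β i j • y j := by
    rw [← algebraMap_smul B', hβ, mul_smul, algebraMap_smul]
  have hg' (j) : ∑ k, a (Sum.inl k) j • g k = -∑ i, β i j • e i := hM <| by
    simpa [he, Finset.smul_sum] using eq_neg_of_add_eq_zero_left (ha j)
  have hy' (i) : ∑ j, β i j • y j = 0 := hN <| by
    simpa [hy, Finset.smul_sum] using (h0 i).symm
  simpa only [map_sum, TensorProduct.mapOfCompatibleSMul_tmul] using
    sum_tmul_eq_zero_of_sum_smul_eq hv hg' hy'

theorem mem_strictClosure_of_smul_mem {T : Type*} [CommRing T] [Algebra B T] [Algebra B' T]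
    [IsScalarTower B B' T] [Module.Finite B T] (n : Ideal B) [n.IsMaximal] {b : B}
    (hT : IsSMulRegular T b)
    (hn : n.map (algebraMap B B') ≤ Ideal.span {algebraMap B B' b}) {w : T}
    (hw : b • w ∈ strictClosure B T) : w ∈ strictClosure B' T := by
  rw [mem_strictClosure_iff, ← sub_eq_zero, ← TensorProduct.smul_tmul', TensorProduct.tmul_smul,
    ← smul_sub] at hw
  rw [mem_strictClosure_iff, ← sub_eq_zero]
  simpa using mapOfCompatibleSMul_eq_zero_of_smul_eq_zero n hT hT hn hw

end BlowUpDescent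

section ArfImpliesStrictlyClosed

universe u

theorem exists_isMaximal_sup_smul_top_ne_top {R M : Type*} [CommRing R] [AddCommGroup M]
    [Module R M] [Module.Finite R M] {P : Submodule R M} (hP : P ≠ ⊤) : ∃ n : Ideal R,
      n.IsMaximal ∧ (∀ c : R, (∀ m : M, c • m ∈ P) → c ∈ n) ∧ P ⊔ n • ⊤ ≠ ⊤ := by
  obtain ⟨N, hN, hPN⟩ := (eq_top_or_exists_le_coatom P).resolve_left hP
  have := isSimpleModule_iff_isCoatom.2 hN
  refine ⟨Module.annihilator R (M ⧸ N), IsSimpleModule.annihilator_isMaximal, fun c hc => ?_,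
    fun h => hN.1 (eq_top_iff.2 (h ▸ sup_le hPN (Submodule.smul_le.2 fun r hr m _ => ?_)))⟩
  · refine Module.mem_annihilator.2 fun x => ?_
    obtain ⟨m, rfl⟩ := N.mkQ_surjective x
    exact (Submodule.Quotient.mk_eq_zero N).2 (hPN (hc m))
  · exact (Submodule.Quotient.mk_eq_zero N).1 (Module.mem_annihilator.1 hr (N.mkQ m))

theorem length_quotient_comap_lt {R M N : Type*} [CommRing R] [AddCommGroup M] [Module R M]
    [AddCommGroup N] [Module R N] (f : M →ₗ[R] N) {P : Submodule R N}
    (hP : Module.length R (N ⧸ P) ≠ ⊤) (hf : P ⊔ LinearMap.range f ≠ ⊤) :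
    Module.length R (M ⧸ P.comap f) < Module.length R (N ⧸ P) := by
  let g : M ⧸ P.comap f →ₗ[R] N ⧸ P := (P.comap f).mapQ P f le_rfl
  have hg : LinearMap.ker g = ⊥ := by
    rw [Submodule.ker_mapQ, Submodule.mkQ_map_self]
  have hrange : LinearMap.range g ≠ ⊤ := fun h => hf <| by
    rw [← Submodule.comap_map_mkQ, ← Submodule.range_mapQ _ _ _ le_rfl, h, Submodule.comap_top]
  obtain ⟨_, _⟩ := isFiniteLength_iff_isNoetherian_isArtinian.1 (Module.length_ne_top_iff.1 hP)
  calc Module.length R (M ⧸ P.comap f)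
      = Module.length R (LinearMap.range g) :=
        (LinearEquiv.ofInjective g (LinearMap.ker_eq_bot.1 hg)).length_eq
    _ < Module.length R (N ⧸ P) := Submodule.length_lt hrange

theorem isArtinianRing_quotient_span_singleton {R : Type*} [CommRing R] [IsNoetherianRing R]
    [Ring.KrullDimLE 1 R] {c : R} (hc : c ∈ R⁰) : IsArtinianRing (R ⧸ Ideal.span {c}) := by
  rw [isArtinianRing_iff_krullDimLE_zero, Ring.krullDimLE_iff]
  have h : ringKrullDim (R ⧸ Ideal.span {c}) + 1 ≤ 0 + 1 :=
    (ringKrullDim_quotient_succ_le_of_nonZeroDivisor hc).trans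
      ((Ring.krullDimLE_iff.1 ‹Ring.KrullDimLE 1 R›).trans (by simp))
  exact ENat.WithBot.add_le_add_natCast_right_iff.1 h

theorem length_ne_top_of_mem_annihilator {R M : Type*} [CommRing R] [IsNoetherianRing R]
    [Ring.KrullDimLE 1 R] [AddCommGroup M] [Module R M] [Module.Finite R M] {c : R} (hc : c ∈ R⁰)
    (hcM : c ∈ Module.annihilator R M) : Module.length R M ≠ ⊤ := by
  have htors : Module.IsTorsionBySet R M (Ideal.span {c}) :=
    (Module.isTorsionBySet_iff_subset_annihilator ..).2
      ((Ideal.span_singleton_le_iff_mem _).2 hcM)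
  let := htors.module
  have : IsScalarTower R (R ⧸ Ideal.span {c}) M := htors.isScalarTower
  have : Module.Finite (R ⧸ Ideal.span {c}) M := .of_restrictScalars_finite R _ _
  have := isArtinianRing_quotient_span_singleton hc
  rw [Module.length_eq_of_surjective (R := R ⧸ Ideal.span {c}) Ideal.Quotient.mk_surjective]
  exact Module.length_ne_top

theorem finite_of_isFractional {R K : Type*} [CommRing R] [IsNoetherianRing R] [CommRing K]
    [Algebra R K] {S : Submonoid R} [IsLocalization S K] {N : Submodule R K}
    (hN : IsFractional S N) : Module.Finite R N := by
  obtain ⟨c, hc, h⟩ := hN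
  have hunit := IsLocalization.map_units K (⟨c, hc⟩ : S)
  have hle : N.map (LinearMap.lsmul R K c) ≤ LinearMap.range (Algebra.linearMap R K) := by
    rintro _ ⟨y, hy, rfl⟩
    exact h y hy
  have : IsNoetherian R (LinearMap.range (Algebra.linearMap R K)) :=
    isNoetherian_of_surjective (Algebra.linearMap R K).rangeRestrict
      (LinearMap.range_rangeRestrict _)
  have hinj : Function.Injective (LinearMap.lsmul R K c) := fun x y hxy => by
    simpa [Algebra.smul_def, hunit.mul_right_inj] using hxy
  exact Module.Finite.iff_fg.2
    (Submodule.fg_of_fg_map_injective _ hinj (isNoetherian_submodule.1 this _ hle))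

/-- The length of `S / R'` as an `R`-module, for an algebra `S` over an `R`-algebra `R'`. -/
noncomputable def relativeLength (R R' S : Type*) [CommRing R] [CommRing R'] [CommRing S]
    [Algebra R R'] [Algebra R S] [Algebra R' S] [IsScalarTower R R' S] : ℕ∞ :=
  Module.length R (S ⧸ (Subalgebra.toSubmodule (⊥ : Subalgebra R' S)).restrictScalars R)

section BlowUp

variable {B K : Type*} [CommRing B] [CommRing K] [Algebra B K]

/-- The subalgebra `b⁻¹ J` of an algebra `K` in which `b` is invertible, for an ideal `J` containing
`b` with `J² ⊆ b J`, i.e. the blow-up of the ring along `J`. -/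
def blowUp (J : Ideal B) {b : B} (hb : b ∈ J) (hJ : J * J ≤ Ideal.span {b} * J)
    (hbK : IsUnit (algebraMap B K b)) : Subalgebra B K where
  carrier := {q | ∃ y ∈ J, algebraMap B K y = algebraMap B K b * q}
  mul_mem' := by
    rintro p q ⟨y, hy, hyp⟩ ⟨z, hz, hzq⟩
    obtain ⟨w, hw, h⟩ := Ideal.mem_span_singleton_mul.1 (hJ (Ideal.mul_mem_mul hy hz))
    refine ⟨w, hw, hbK.mul_left_cancel ?_⟩
    rw [← map_mul, h, map_mul, hyp, hzq]
    ring
  add_mem' := by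
    rintro p q ⟨y, hy, hyp⟩ ⟨z, hz, hzq⟩
    exact ⟨y + z, J.add_mem hy hz, by rw [map_add, hyp, hzq, mul_add]⟩
  algebraMap_mem' r := ⟨b * r, J.mul_mem_right r hb, map_mul ..⟩

variable {J : Ideal B} {b : B} (hb : b ∈ J) (hJ : J * J ≤ Ideal.span {b} * J)
    (hbK : IsUnit (algebraMap B K b))

theorem map_algebraMap_blowUp_le : J.map (algebraMap B (blowUp J hb hJ hbK)) ≤
    Ideal.span {algebraMap B (blowUp J hb hJ hbK) b} := by
  refine Ideal.map_le_iff_le_comap.2 fun y hy => Ideal.mem_span_singleton.2 ?_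
  have h : algebraMap B K b * (hbK.unit⁻¹ * algebraMap B K y) = algebraMap B K y := by
    rw [← mul_assoc, hbK.mul_val_inv, one_mul]
  exact ⟨⟨_, y, hy, h.symm⟩, Subtype.ext h.symm⟩

/-- The blow-up `b⁻¹ (J D)` of an overring `D` of `B` along the extension of `J`, as an algebra over
the blow-up `b⁻¹ J` of `B`. -/
def blowUpExtension (D : Subalgebra B K) : Subalgebra (blowUp J hb hJ hbK) K where
  __ := blowUp (J.map (algebraMap B D)) (Ideal.mem_map_of_mem (algebraMap B D) hb)
    (by rw [← Ideal.map_mul, ← Set.image_singleton, ← Ideal.map_span, ← Ideal.map_mul]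
        exact Ideal.map_mono hJ) hbK
  algebraMap_mem' := by
    rintro ⟨q, y, hy, h⟩
    exact ⟨algebraMap B D y, Ideal.mem_map_of_mem _ hy, h⟩

theorem mem_blowUpExtension_of_mem {D : Subalgebra B K} {d : K} (hd : d ∈ D) :
    d ∈ blowUpExtension hb hJ hbK D :=
  ⟨algebraMap B D b * ⟨d, hd⟩, Ideal.mul_mem_right _ _ (Ideal.mem_map_of_mem _ hb), rfl⟩

theorem exists_eq_add_mul_of_mem_strictClosure [J.IsMaximal] {D : Subalgebra B K}
    [Module.Finite B (blowUpExtension hb hJ hbK D)] {x : D} (hx : x ∈ strictClosure B D) :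
    ∃ (r : B) (w : blowUpExtension hb hJ hbK D),
      w ∈ strictClosure (blowUp J hb hJ hbK) (blowUpExtension hb hJ hbK D) ∧
      (x : K) = algebraMap B K r + algebraMap B K b * w := by
  obtain ⟨r, hr⟩ := exists_sub_mem_map_of_mem_strictClosure hx J
  have hxr : x - algebraMap B D r ∈ strictClosure B D := sub_mem hx (algebraMap_mem _ r)
  obtain ⟨q, hq⟩ := hbK.dvd (a := (x - algebraMap B K r : K))
  let w : blowUpExtension hb hJ hbK D := ⟨q, _, hr, hq⟩
  let i : D →ₐ[B] blowUpExtension hb hJ hbK D :=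
    AlgHom.codRestrict D.val ((blowUpExtension hb hJ hbK D).restrictScalars B) fun d =>
      mem_blowUpExtension_of_mem hb hJ hbK d.2
  have hreg : IsSMulRegular (blowUpExtension hb hJ hbK D) b := fun p q hpq => Subtype.ext <|
    hbK.mul_left_cancel <| by
      have h : b • (p : K) = b • (q : K) := congrArg Subtype.val hpq
      simpa only [Algebra.smul_def] using h
  refine ⟨r, w, mem_strictClosure_of_smul_mem J hreg (map_algebraMap_blowUp_le hb hJ hbK) ?_, ?_⟩
  · convert map_mem_strictClosure i hxr
    exact Subtype.ext ((Algebra.smul_def b (w : K)).trans hq.symm)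
  · rw [← hq, add_sub_cancel]

variable (R : Type*) [CommRing R] [Algebra R B] [Algebra R K] [IsScalarTower R B K]

/-- Multiplication by `b`, which maps the blow-up of `D` onto the extended ideal `J D`. -/
def blowUpExtensionMul (D : Subalgebra B K) : blowUpExtension hb hJ hbK D →ₗ[R] D where
  toFun d := ⟨algebraMap B K b * d, by
    obtain ⟨z, -, hz⟩ := d.2
    exact hz ▸ z.2⟩
  map_add' d e := Subtype.ext (mul_add _ _ _)
  map_smul' r d := Subtype.ext (mul_smul_comm r _ _)

theorem range_blowUpExtensionMul (D : Subalgebra B K) :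
    LinearMap.range (blowUpExtensionMul hb hJ hbK R D) =
      (J.map (algebraMap B D)).restrictScalars R := by
  ext d
  constructor
  · rintro ⟨q, rfl⟩
    obtain ⟨z, hz, hzq⟩ := q.2
    rwa [← show z = blowUpExtensionMul hb hJ hbK R D q from Subtype.ext hzq]
  · intro hd
    obtain ⟨q, hq⟩ := hbK.dvd (a := (d : K))
    exact ⟨⟨q, d, hd, hq⟩, Subtype.ext hq.symm⟩

theorem comap_blowUpExtensionMul_bot [J.IsMaximal] {D : Subalgebra B K}
    (hJD : J.map (algebraMap B D) ≠ ⊤) :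
    ((Subalgebra.toSubmodule (⊥ : Subalgebra B D)).restrictScalars R).comap
        (blowUpExtensionMul hb hJ hbK R D) =
      (Subalgebra.toSubmodule (⊥ : Subalgebra (blowUp J hb hJ hbK)
        (blowUpExtension hb hJ hbK D))).restrictScalars R := by
  have hJ' : (J.map (algebraMap B D)).comap (algebraMap B D) = J :=
    (Ideal.IsMaximal.eq_of_le ‹_› (Ideal.comap_ne_top _ hJD) Ideal.le_comap_map).symm
  ext q
  constructor
  · intro hq
    obtain ⟨β, hβ⟩ := Algebra.mem_bot.1 hq
    obtain ⟨z, hz, hzq⟩ := q.2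
    have hβz : algebraMap B D β = z := hβ.trans (Subtype.ext hzq.symm)
    have hβJ : β ∈ J := by rwa [← hJ', Ideal.mem_comap, hβz]
    exact Algebra.mem_bot.2 ⟨⟨q, β, hβJ, congrArg Subtype.val hβ⟩, Subtype.ext rfl⟩
  · intro hq
    obtain ⟨⟨q, β, hβ, hβq⟩, rfl⟩ := Algebra.mem_bot.1 hq
    exact Algebra.mem_bot.2 ⟨β, Subtype.ext hβq⟩

theorem relativeLength_blowUpExtension_lt [J.IsMaximal] {D : Subalgebra B K}
    (hJD : Subalgebra.toSubmodule (⊥ : Subalgebra B D) ⊔ J • ⊤ ≠ ⊤)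
    (hD : relativeLength R B D ≠ ⊤) :
    relativeLength R (blowUp J hb hJ hbK) (blowUpExtension hb hJ hbK D) <
      relativeLength R B D := by
  rw [Ideal.smul_top_eq_map] at hJD
  rw [relativeLength, ← comap_blowUpExtensionMul_bot _ _ _ _ fun h => hJD (by simp [h])]
  refine length_quotient_comap_lt _ hD fun h => hJD ?_
  rw [range_blowUpExtensionMul] at h
  refine eq_top_iff.2 fun d _ => ?_
  obtain ⟨β, hβ, z, hz, rfl⟩ := Submodule.mem_sup.1 (h ▸ Submodule.mem_top (x := d))
  exact Submodule.add_mem_sup hβ hz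

end BlowUp

section ArfBlowUp

variable {R B : Type u} [CommRing R] [CommRing B] [Algebra R B] [Algebra B (FractionRing R)]
  [IsScalarTower R B (FractionRing R)]

/-- The ideal `a J ∩ R` of `R`, for an ideal `J` of a ring `B` lying between `R` and its total ring
of fractions. -/
def scaledIdeal (a : R) (J : Ideal B) : Ideal R where
  carrier := {y | ∃ β ∈ J, algebraMap R (FractionRing R) y =
    algebraMap R (FractionRing R) a * algebraMap B (FractionRing R) β}
  add_mem' := by
    rintro y z ⟨β, hβ, hy⟩ ⟨γ, hγ, hz⟩
    exact ⟨β + γ, J.add_mem hβ hγ, by rw [map_add, map_add, hy, hz, mul_add]⟩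
  zero_mem' := ⟨0, J.zero_mem, by simp⟩
  smul_mem' := by
    rintro r y ⟨β, hβ, hy⟩
    refine ⟨algebraMap R B r * β, J.mul_mem_left _ hβ, ?_⟩
    rw [smul_eq_mul, map_mul, hy, map_mul, ← IsScalarTower.algebraMap_apply]
    ring

variable {a : R} {J : Ideal B}

theorem scaledIdeal_mono {J' : Ideal B} (h : J ≤ J') : scaledIdeal a J ≤ scaledIdeal a J' :=
  fun _ ⟨β, hβ, hy⟩ => ⟨β, h hβ, hy⟩

theorem scaledIdeal_mul_le {a' : R} {J' : Ideal B} :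
    scaledIdeal a J * scaledIdeal a' J' ≤ scaledIdeal (a * a') (J * J') := by
  refine Ideal.mul_le.2 ?_
  rintro y ⟨β, hβ, hy⟩ z ⟨γ, hγ, hz⟩
  refine ⟨β * γ, Ideal.mul_mem_mul hβ hγ, ?_⟩
  rw [map_mul, map_mul, map_mul, hy, hz]
  ring

theorem scaledIdeal_pow_le (i : ℕ) : scaledIdeal a J ^ i ≤ scaledIdeal (a ^ i) (J ^ i) := by
  induction i with
  | zero => exact fun y _ => ⟨algebraMap R B y, by simp, by simp [← IsScalarTower.algebraMap_apply]⟩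
  | succ i ih =>
    rw [pow_succ, pow_succ, pow_succ]
    exact (Ideal.mul_mono_left ih).trans scaledIdeal_mul_le

variable (a B) in
/-- `B` is `a⁻¹ I` for an integrally closed ideal `I` of `R` containing the non-zerodivisor `a`. The
iterated blow-ups of an Arf ring along maximal ideals have this form. -/
structure IsIntegrallyClosedIdealQuotient : Prop where
  injective : Function.Injective (algebraMap B (FractionRing R))
  mem_nonZeroDivisors : a ∈ R⁰
  exists_algebraMap_eq (β : B) : ∃ y : R, algebraMap R (FractionRing R) y =
    algebraMap R (FractionRing R) a * algebraMap B (FractionRing R) β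
  isIntegrallyClosedIdeal : (scaledIdeal a (⊤ : Ideal B)).IsIntegrallyClosedIdeal

namespace IsIntegrallyClosedIdealQuotient

theorem of_self : IsIntegrallyClosedIdealQuotient R (1 : R) where
  injective := IsFractionRing.injective R _
  mem_nonZeroDivisors := one_mem _
  exists_algebraMap_eq β := ⟨β, by simp⟩
  isIntegrallyClosedIdeal := by
    have h : scaledIdeal (1 : R) (⊤ : Ideal R) = ⊤ :=
      (Ideal.eq_top_iff_one _).2 ⟨1, trivial, by simp⟩
    rw [h]
    refine Set.eq_univ_of_forall fun y => ⟨1, one_pos, fun _ => -y, by simp, by simp⟩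

theorem scaledIdeal_isIntegrallyClosedIdeal (hB : IsIntegrallyClosedIdealQuotient B a)
    [J.IsPrime] : (scaledIdeal a J).IsIntegrallyClosedIdeal := by
  refine Set.Subset.antisymm ?_ fun y hy =>
    ⟨1, one_pos, fun _ => -y, by simpa using hy, by simp⟩
  rintro y ⟨m, hm, c, hc, hy⟩
  have hyI : y ∈ scaledIdeal a (⊤ : Ideal B) := hB.isIntegrallyClosedIdeal.subset
    ⟨m, hm, c, fun i hi => Ideal.pow_right_mono (scaledIdeal_mono le_top) i (hc i hi), hy⟩
  have hpow : y ^ m ∈ scaledIdeal (a ^ m) J := by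
    rw [eq_neg_of_add_eq_zero_left hy]
    refine neg_mem (sum_mem fun i hi => ?_)
    obtain ⟨hi₀, him⟩ := Finset.mem_Icc.1 hi
    have h := scaledIdeal_mul_le (Ideal.mul_mem_mul (scaledIdeal_pow_le i (hc i hi))
      (scaledIdeal_pow_le (m - i) (Ideal.pow_mem_pow hyI (m - i))))
    rw [← pow_add, Nat.add_sub_cancel' him] at h
    have hle : J ^ i * (⊤ : Ideal B) ^ (m - i) ≤ J :=
      Ideal.mul_le_left.trans (Ideal.pow_le_self (Nat.one_le_iff_ne_zero.1 hi₀))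
    exact scaledIdeal_mono hle h
  obtain ⟨β, -, hβ⟩ := hyI
  obtain ⟨γ, hγ, hβγ⟩ := hpow
  have ha : IsUnit (algebraMap R (FractionRing R) a) :=
    IsLocalization.map_units _ (⟨a, hB.mem_nonZeroDivisors⟩ : R⁰)
  have hβm : β ^ m = γ := hB.injective <| (ha.pow m).mul_left_cancel <| by
    rw [map_pow, ← mul_pow, ← hβ, ← map_pow, ← map_pow, hβγ]
  exact ⟨β, Ideal.IsPrime.mem_of_pow_mem ‹_› m (hβm ▸ hγ), hβ⟩

theorem exists_mul_self_le [IsNoetherianRing R] (hR : IsArfRing R)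
    (hB : IsIntegrallyClosedIdealQuotient B a) [J.IsPrime] {c : R} (hc : c ∈ R⁰)
    (hcJ : algebraMap R B c ∈ J) :
    ∃ b ∈ J, ∃ a' ∈ R⁰, algebraMap R (FractionRing R) a' = algebraMap R (FractionRing R) a *
      algebraMap B (FractionRing R) b ∧ J * J ≤ Ideal.span {b} * J := by
  obtain ⟨hweak, hred⟩ := isArfRing_iff.1 hR
  have hI := hB.scaledIdeal_isIntegrallyClosedIdeal (J := J)
  obtain ⟨a', ha', ha'₀, hle⟩ := hred _ hI ⟨a * c, ⟨_, hcJ, by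
    rw [map_mul, ← IsScalarTower.algebraMap_apply]⟩, mul_mem hB.mem_nonZeroDivisors hc⟩
  have hmul := hweak.mul_self_eq hI ha' ha'₀ hle
  obtain ⟨b, hb, hab⟩ := ha'
  refine ⟨b, hb, a', ha'₀, hab, Ideal.mul_le.2 fun β hβ γ hγ => ?_⟩
  obtain ⟨y, hy⟩ := hB.exists_algebraMap_eq β
  obtain ⟨z, hz⟩ := hB.exists_algebraMap_eq γ
  have hyJ : y ∈ scaledIdeal a J := ⟨β, hβ, hy⟩
  have hzJ : z ∈ scaledIdeal a J := ⟨γ, hγ, hz⟩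
  obtain ⟨w, ⟨δ, hδ, hw⟩, h⟩ :=
    Ideal.mem_span_singleton_mul.1 (hmul.le (Ideal.mul_mem_mul hyJ hzJ))
  have ha : IsUnit (algebraMap R (FractionRing R) a) :=
    IsLocalization.map_units _ (⟨a, hB.mem_nonZeroDivisors⟩ : R⁰)
  refine Ideal.mem_span_singleton_mul.2 ⟨δ, hδ, hB.injective <| (ha.mul ha).mul_left_cancel ?_⟩
  have h' := congrArg (algebraMap R (FractionRing R)) h
  simp only [map_mul, hab, hw, hy, hz] at h' ⊢
  linear_combination h'

theorem blowUp (hB : IsIntegrallyClosedIdealQuotient B a) [J.IsPrime] {a' : R} (ha' : a' ∈ R⁰)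
    {b : B} (hb : b ∈ J) (hJ : J * J ≤ Ideal.span {b} * J)
    (hbK : IsUnit (algebraMap B (FractionRing R) b))
    (hab : algebraMap R (FractionRing R) a' = algebraMap R (FractionRing R) a *
      algebraMap B (FractionRing R) b) :
    IsIntegrallyClosedIdealQuotient (blowUp J hb hJ hbK) a' where
  injective := Subtype.val_injective
  mem_nonZeroDivisors := ha'
  exists_algebraMap_eq := by
    intro p
    obtain ⟨β, -, hβ⟩ := p.2
    obtain ⟨y, hy⟩ := hB.exists_algebraMap_eq β
    exact ⟨y, by rw [hy, hβ, hab, mul_assoc]; rfl⟩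
  isIntegrallyClosedIdeal := by
    convert hB.scaledIdeal_isIntegrallyClosedIdeal (J := J) using 1
    ext y
    constructor
    · rintro ⟨p, -, hy⟩
      obtain ⟨β, hβ, hp⟩ := p.2
      exact ⟨β, hβ, by rw [hy, hab, hp, mul_assoc]; rfl⟩
    · rintro ⟨β, hβ, hy⟩
      obtain ⟨q, hq⟩ := hbK.dvd (a := algebraMap B (FractionRing R) β)
      refine ⟨⟨q, β, hβ, hq⟩, trivial, ?_⟩
      rw [hab, mul_assoc]
      exact hy.trans (congrArg _ hq)

end IsIntegrallyClosedIdealQuotient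

theorem algebraMap_mul_mem_bot {D : Subalgebra B (FractionRing R)} {c : R}
    (hc : ∀ d ∈ D, IsLocalization.IsInteger R (c • d)) (d : D) :
    algebraMap R B c • d ∈ (⊥ : Subalgebra B D) := by
  obtain ⟨r, hr⟩ := hc d d.2
  refine Algebra.mem_bot.2 ⟨algebraMap R B r, Subtype.ext ?_⟩
  have h : algebraMap B (FractionRing R) (algebraMap R B r) =
      algebraMap R B c • (d : FractionRing R) := by
    rw [← IsScalarTower.algebraMap_apply, hr, algebraMap_smul]
  exact h

theorem relativeLength_ne_top [IsNoetherianRing R] [Ring.KrullDimLE 1 R]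
    {D : Subalgebra B (FractionRing R)} [Module.Finite R D] {c : R} (hc : c ∈ R⁰)
    (hcD : ∀ d : D, algebraMap R B c • d ∈ (⊥ : Subalgebra B D)) : relativeLength R B D ≠ ⊤ := by
  refine length_ne_top_of_mem_annihilator hc (Module.mem_annihilator.2 fun x => ?_)
  obtain ⟨d, rfl⟩ := Submodule.mkQ_surjective _ x
  refine (Submodule.Quotient.mk_eq_zero _).2 ?_
  have h := hcD d
  rwa [algebraMap_smul] at h

theorem isFractional_blowUpExtension {D : Subalgebra B (FractionRing R)}
    (hD : IsFractional R⁰ ((Subalgebra.toSubmodule D).restrictScalars R)) {b : B} (hb : b ∈ J)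
    (hJ : J * J ≤ Ideal.span {b} * J) (hbK : IsUnit (algebraMap B (FractionRing R) b))
    {a' : R} (ha' : a' ∈ R⁰) (hab : algebraMap R (FractionRing R) a' =
      algebraMap R (FractionRing R) a * algebraMap B (FractionRing R) b) :
    IsFractional R⁰
      ((Subalgebra.toSubmodule (blowUpExtension hb hJ hbK D)).restrictScalars R) := by
  obtain ⟨c, hc, hcD⟩ := hD
  refine ⟨a' * c, mul_mem ha' hc, ?_⟩
  rintro q ⟨z, -, hz⟩
  obtain ⟨r, hr⟩ := hcD z z.2
  refine ⟨a * r, ?_⟩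
  change (z : FractionRing R) = algebraMap B (FractionRing R) b * q at hz
  rw [map_mul, hr, Algebra.smul_def, Algebra.smul_def, map_mul, hab, hz]
  ring

theorem strictClosure_eq_bot_of_isFractional [IsNoetherianRing R] [Ring.KrullDimLE 1 R]
    (hR : IsArfRing R) (hB : IsIntegrallyClosedIdealQuotient B a)
    {D : Subalgebra B (FractionRing R)}
    (hD : IsFractional R⁰ ((Subalgebra.toSubmodule D).restrictScalars R)) :
    strictClosure B D = ⊥ := by
  induction hl : relativeLength R B D using WellFoundedLT.induction generalizing a B with
  | ind l ih =>
  have : Module.Finite R D := finite_of_isFractional hD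
  have : Module.Finite B D := .of_restrictScalars_finite R B D
  by_cases hBD : Subalgebra.toSubmodule (⊥ : Subalgebra B D) = ⊤
  · exact eq_bot_iff.2 fun x _ => hBD.ge (Submodule.mem_top (x := x))
  obtain ⟨n, hn, hannih, hnD⟩ := exists_isMaximal_sup_smul_top_ne_top hBD
  obtain ⟨c, hc, hcD⟩ := id hD
  have hcB := algebraMap_mul_mem_bot hcD
  obtain ⟨b, hb, a', ha', hab, hnn⟩ := hB.exists_mul_self_le hR hc (hannih _ hcB)
  have hbK : IsUnit (algebraMap B (FractionRing R) b) :=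
    (IsUnit.mul_iff.1 (hab ▸ IsLocalization.map_units (FractionRing R) (⟨a', ha'⟩ : R⁰))).2
  have hD' := isFractional_blowUpExtension hD hb hnn hbK ha' hab
  have hlt := relativeLength_blowUpExtension_lt hb hnn hbK R hnD (relativeLength_ne_top hc hcB)
  have ih' := ih _ (hl ▸ hlt) (hB.blowUp ha' hb hnn hbK hab) hD' rfl
  have : Module.Finite R (blowUpExtension hb hnn hbK D) := finite_of_isFractional hD'
  have : Module.Finite B (blowUpExtension hb hnn hbK D) := .of_restrictScalars_finite R B _
  refine eq_bot_iff.2 fun x hx => ?_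
  obtain ⟨r, w, hw, hxw⟩ := exists_eq_add_mul_of_mem_strictClosure hb hnn hbK hx
  obtain ⟨q, hqw⟩ := Algebra.mem_bot.1 (ih' ▸ hw)
  obtain ⟨β, -, hβ⟩ := q.2
  refine Algebra.mem_bot.2 ⟨r + β, Subtype.ext ?_⟩
  rw [hxw, ← hqw]
  exact (map_add _ _ _).trans (congrArg _ hβ)

end ArfBlowUp

theorem IsArfRing.isStrictlyClosed {R : Type*} [CommRing R] [IsNoetherianRing R]
    [Ring.KrullDimLE 1 R] (hR : IsArfRing R) : IsStrictlyClosed R := by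
  refine isStrictlyClosed_iff.2 (eq_bot_iff.2 fun x hx => ?_)
  obtain ⟨T, hxT, hT, hxT'⟩ := exists_fg_mem_strictClosure hx
  have : Algebra.FiniteType R T := T.fg_iff_finiteType.1 hT
  have : Algebra.IsIntegral R T := .of_injective T.val Subtype.val_injective
  let ι := (integralClosure R (FractionRing R)).val
  have hTfin : Module.Finite R T := Algebra.IsIntegral.finite (A := T)
  have hT' : (Subalgebra.toSubmodule T).FG := Module.Finite.iff_fg.1 hTfin
  have hfrac : IsFractional R⁰ (Subalgebra.toSubmodule (T.map ι)) :=
    FractionalIdeal.isFractional_of_fg (hT'.map ι.toLinearMap)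
  have hxD := map_mem_strictClosure
    (T.equivMapOfInjective ι Subtype.val_injective).toAlgHom hxT'
  rw [strictClosure_eq_bot_of_isFractional (D := T.map ι) hR .of_self hfrac] at hxD
  obtain ⟨r, hr⟩ := Algebra.mem_bot.1 hxD
  have hrx := congrArg Subtype.val hr
  exact Algebra.mem_bot.2 ⟨r, Subtype.ext hrx⟩

end ArfImpliesStrictlyClosed

section SerreCondition

variable {R : Type*} [CommRing R]

theorem IsRegularSeq.mem_of_get_mul_mem {xs : List R} (hxs : IsRegularSeq R xs)
    (i : Fin xs.length) {r : R} (hr : xs.get i * r ∈ Ideal.span {y | y ∈ xs.take i}) :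
    r ∈ Ideal.span {y | y ∈ xs.take i} := by
  rw [← Ideal.Quotient.eq_zero_iff_mem] at hr ⊢
  refine hxs i i.2 (Eq.trans ?_ (smul_zero (xs.get i)).symm)
  rwa [map_mul] at hr

section IsLocalRing

variable [IsLocalRing R]

theorem not_ringDepthGE_one {u : R} (hu : u ≠ 0)
    (h : ∀ r ∈ IsLocalRing.maximalIdeal R, r * u = 0) : ¬RingDepthGE R 1 := by
  rintro ⟨xs, hlen, hmem, hreg⟩
  obtain ⟨x, rfl⟩ := List.length_eq_one_iff.1 hlen
  have := hreg.mem_of_get_mul_mem ⟨0, by simp⟩ (r := u)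
  exact hu (by simpa [h x (hmem x (by simp))] using this)

theorem not_ringDepthGE_two {s u : R} (hs : s ∈ R⁰) (hu : u ∉ Ideal.span {s})
    (h : ∀ r ∈ IsLocalRing.maximalIdeal R, r * u ∈ Ideal.span {s}) : ¬RingDepthGE R 2 := by
  rintro ⟨xs, hlen, hmem, hreg⟩
  obtain ⟨x, y, rfl⟩ := List.length_eq_two.1 hlen
  have hx (r : R) (hr : x * r = 0) : r = 0 := by
    simpa [hr] using hreg.mem_of_get_mul_mem ⟨0, by simp⟩ (r := r)
  have hy (r : R) (hr : x ∣ y * r) : x ∣ r := by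
    simpa [Ideal.mem_span_singleton, hr] using hreg.mem_of_get_mul_mem ⟨1, by simp⟩ (r := r)
  simp only [Ideal.mem_span_singleton] at hu h
  obtain ⟨v, hv⟩ := h x (hmem x (by simp))
  obtain ⟨w, hw⟩ := h y (hmem y (by simp))
  have hvw : y * v = x * w := (mul_cancel_left_mem_nonZeroDivisors hs).1 (by
    linear_combination x * hw - y * hv)
  obtain ⟨t, rfl⟩ := hy v ⟨w, hvw⟩
  exact hu ⟨t, sub_eq_zero.1 (hx _ (by linear_combination hv))⟩

theorem one_le_ringKrullDim_of_mem_maximalIdeal {s : R} (hs : s ∈ R⁰)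
    (hm : s ∈ IsLocalRing.maximalIdeal R) : 1 ≤ ringKrullDim R := by
  have : Nontrivial (R ⧸ Ideal.span {s}) :=
    Ideal.Quotient.nontrivial_iff.2 (Ideal.span_singleton_eq_top.not.2 hm)
  calc (1 : WithBot ℕ∞) ≤ ringKrullDim (R ⧸ Ideal.span {s}) + 1 :=
        le_add_of_nonneg_left ringKrullDim_nonneg_of_nontrivial
    _ ≤ ringKrullDim R := ringKrullDim_quotient_succ_le_of_nonZeroDivisor hs

end IsLocalRing

theorem mem_colon_singleton_mk_iff {I : Ideal R} {r u : R} :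
    r ∈ (⊥ : Submodule R (R ⧸ I)).colon {Ideal.Quotient.mk I u} ↔ r * u ∈ I := by
  rw [Submodule.mem_colon_singleton, Submodule.mem_bot, ← Ideal.Quotient.eq_zero_iff_mem, map_mul]
  rfl

theorem SerreSCondition.ringDepthGE_of_le_height {n k : ℕ} (hR : SerreSCondition R n)
    (hk : k ≤ n) (P : Ideal R) [P.IsPrime] (hP : (k : ℕ∞) ≤ P.height) :
    RingDepthGE (Localization.AtPrime P) k := by
  refine hR P k hk ?_
  rw [IsLocalization.AtPrime.ringKrullDim_eq_height P]
  exact WithBot.coe_le_coe.2 hP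

variable [IsNoetherianRing R]

theorem exists_forall_mul_mem_map_of_mem_associatedPrimes {I P : Ideal R} [P.IsPrime]
    (hP : P ∈ associatedPrimes R (R ⧸ I)) :
    ∃ u ∉ I.map (algebraMap R (Localization.AtPrime P)),
      ∀ r ∈ IsLocalRing.maximalIdeal (Localization.AtPrime P),
        r * u ∈ I.map (algebraMap R (Localization.AtPrime P)) := by
  obtain ⟨-, u, hu⟩ := isAssociatedPrime_iff.1 hP
  obtain ⟨u, rfl⟩ := Ideal.Quotient.mk_surjective u
  have mem_P (r : R) : r ∈ P ↔ r * u ∈ I := by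
    rw [hu, mem_colon_singleton_mk_iff]
  refine ⟨algebraMap R _ u, fun h => ?_, fun r hr => ?_⟩
  · obtain ⟨t, ht, htu⟩ := (IsLocalization.algebraMap_mem_map_algebraMap_iff P.primeCompl _ I u).1 h
    exact ht ((mem_P t).2 htu)
  · rw [← Localization.AtPrime.map_eq_maximalIdeal] at hr
    refine Submodule.span_induction ?_ (by simp) (fun _ _ _ _ hx hy => ?_)
      (fun c _ _ hx => ?_) hr
    · rintro _ ⟨r, hr, rfl⟩
      rw [← map_mul]
      exact Ideal.mem_map_of_mem _ ((mem_P r).1 hr)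
    · rw [add_mul]
      exact add_mem hx hy
    · rw [smul_mul_assoc]
      exact Ideal.mul_mem_left _ c hx

theorem mem_of_forall_mem_associatedPrimes {I : Ideal R} {y : R}
    (h : ∀ (P : Ideal R) [P.IsPrime], P ∈ associatedPrimes R (R ⧸ I) →
      algebraMap R (Localization.AtPrime P) y ∈ I.map (algebraMap R (Localization.AtPrime P))) :
    y ∈ I := by
  by_contra hy
  obtain ⟨P, hP, hle⟩ := exists_le_isAssociatedPrime_of_isNoetherianRing R (M := R ⧸ I)
    (Ideal.Quotient.mk I y) (by rwa [Ne, Ideal.Quotient.eq_zero_iff_mem])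
  have := hP.isPrime
  obtain ⟨t, ht, hty⟩ :=
    (IsLocalization.algebraMap_mem_map_algebraMap_iff P.primeCompl _ I y).1 (h P hP)
  exact ht (hle (mem_colon_singleton_mk_iff.2 hty))

theorem SerreSCondition.associatedPrimes_subset_minimalPrimes {n : ℕ} (hR : SerreSCondition R n)
    (hn : 1 ≤ n) : associatedPrimes R R ⊆ minimalPrimes R := by
  intro P hP
  have := hP.isPrime
  rw [← LinearEquiv.AssociatedPrimes.eq (Submodule.quotEquivOfEqBot (⊥ : Ideal R) rfl)] at hP
  obtain ⟨u, hu, hmu⟩ := exists_forall_mul_mem_map_of_mem_associatedPrimes hP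
  simp only [Ideal.map_bot, Ideal.mem_bot] at hu hmu
  have hP1 := mt (hR.ringDepthGE_of_le_height hn P) (not_ringDepthGE_one hu hmu)
  rwa [← Ideal.height_eq_zero_iff, ← Order.lt_one_iff, ← not_le]

theorem SerreSCondition.ringKrullDim_eq_one {n : ℕ} (hR : SerreSCondition R n) (hn : 2 ≤ n)
    {s : R} (hs : s ∈ R⁰) {P : Ideal R} [P.IsPrime]
    (hP : P ∈ associatedPrimes R (R ⧸ Ideal.span {s})) :
    ringKrullDim (Localization.AtPrime P) = 1 := by
  obtain ⟨u, hu, hmu⟩ := exists_forall_mul_mem_map_of_mem_associatedPrimes hP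
  have hs' : algebraMap R (Localization.AtPrime P) s ∈ (Localization.AtPrime P)⁰ :=
    IsLocalization.nonZeroDivisors_le_comap P.primeCompl _ hs
  have hsP : algebraMap R (Localization.AtPrime P) s ∈ IsLocalRing.maximalIdeal _ := by
    rw [IsLocalization.AtPrime.to_map_mem_maximal_iff _ P]
    refine IsAssociatedPrime.annihilator_le hP ?_
    rw [Submodule.annihilator_top, Ideal.annihilator_quotient]
    exact Ideal.mem_span_singleton_self s
  rw [Ideal.map_span, Set.image_singleton] at hu hmu
  have hP2 := mt (hR.ringDepthGE_of_le_height hn P) (not_ringDepthGE_two hs' hu hmu)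
  have hP1 := one_le_ringKrullDim_of_mem_maximalIdeal hs' hsP
  rw [IsLocalization.AtPrime.ringKrullDim_eq_height P] at hP1 ⊢
  have : P.height = 1 := le_antisymm (Order.le_of_lt_succ (not_le.1 hP2)) (by exact_mod_cast hP1)
  rw [this, WithBot.coe_one]

end SerreCondition

section Localization

theorem exists_mem_nonZeroDivisors_algebraMap_mem_span {R R' : Type*} [CommRing R] [CommRing R']
    [Algebra R R'] [IsNoetherianRing R] (M : Submonoid R) [IsLocalization M R']
    (hR : associatedPrimes R R ⊆ minimalPrimes R) {w : R'} (hw : w ∈ R'⁰) :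
    ∃ s ∈ R⁰, algebraMap R R' s ∈ Ideal.span {w} := by
  by_contra! h
  set I := (Ideal.span {w}).comap (algebraMap R R')
  obtain ⟨p, hp, hIp⟩ : ∃ p ∈ associatedPrimes R R, I ≤ p :=
    (I.subset_union_prime_finite (associatedPrimes.finite R R) (f := id) 0 0
      fun _ hp _ _ => hp.isPrime).1 <| by
        simp only [id, biUnion_associatedPrimes_eq_compl_nonZeroDivisors]
        exact fun s hs hs₀ => h s hs₀ hs
  have hpmin := hR hp
  have hpI : p ∈ I.minimalPrimes := ⟨⟨hp.isPrime, hIp⟩, fun J hJ => hpmin.2 ⟨hJ.1, bot_le⟩⟩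
  obtain ⟨q, hq, rfl⟩ := Ideal.exists_minimalPrimes_comap_eq _ p hpI
  have hqmin : q ∈ minimalPrimes R' := by
    have := IsLocalization.minimalPrimes_map M R' (⊥ : Ideal R)
    rw [Ideal.map_bot] at this
    exact this.ge hpmin
  exact notMem_nonZeroDivisors_of_mem_mem_minimalPrimes
    (hq.1.2 (Ideal.mem_span_singleton_self w)) hqmin hw

theorem isLocalization_of_le_of_exists_mul_mem {R : Type*} (S : Type*) [CommRing R] [CommRing S]
    [Algebra R S] {M N : Submonoid R} [IsLocalization N S] (h : M ≤ N)
    (h' : ∀ x ∈ N, ∃ m : R, m * x ∈ M) : IsLocalization M S :=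
  have : IsLocalization N (Localization M) :=
    IsLocalization.isLocalization_of_is_exists_mul_mem (Localization M) M N h fun x => h' x x.2
  IsLocalization.isLocalization_of_algEquiv M (IsLocalization.algEquiv N (Localization M) S)

/-- The `R`-algebra map `R̅ → R̅'` between integral closures restricting `φ : K → K'`, for
`R → R' → K'`. -/
def integralClosureMap {R R' K K' : Type*} [CommRing R] [CommRing R'] [CommRing K] [CommRing K']
    [Algebra R R'] [Algebra R K] [Algebra R' K'] [Algebra R K'] [IsScalarTower R R' K']
    (φ : K →ₐ[R] K') : integralClosure R K →ₐ[R] integralClosure R' K' :=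
  (φ.comp (integralClosure R K).val).codRestrict ((integralClosure R' K').restrictScalars R)
    fun x => (x.2.map φ).tower_top

theorem strictClosure_eq_bot_of_isLocalization {R R' S S' : Type*} [CommRing R] [CommRing R']
    [CommRing S] [CommRing S'] [Algebra R R'] [Algebra R S] [Algebra R' S'] [Algebra R S']
    [Algebra S S'] [IsScalarTower R R' S'] [IsScalarTower R S S'] (M : Submonoid R)
    [IsLocalization M R'] [IsLocalization (Algebra.algebraMapSubmonoid S M) S']
    (h : strictClosure R S = ⊥) : strictClosure R' S' = ⊥ := by
  let g := (IsScalarTower.toAlgHom R S S').toLinearMap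
  have : IsLocalizedModule M g := inferInstance
  refine eq_bot_iff.2 fun x hx => ?_
  obtain ⟨⟨c, t⟩, hc : t • x = g c⟩ := IsLocalizedModule.surj M g x
  have := IsLocalization.tensorProduct_compatibleSMul M R' S' S'
  have hx' : x ∈ strictClosure R S' :=
    congrArg (TensorProduct.mapOfCompatibleSMul R R' R' S' S') (mem_strictClosure_iff.1 hx)
  have hgc : TensorProduct.map g g (c ⊗ₜ 1) = TensorProduct.map g g (1 ⊗ₜ c) := by
    have hg₁ : g 1 = 1 := map_one (algebraMap S S')
    rw [TensorProduct.map_tmul, TensorProduct.map_tmul, hg₁, ← hc, Submonoid.smul_def,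
      ← TensorProduct.smul_tmul', mem_strictClosure_iff.1 hx', TensorProduct.tmul_smul]
  obtain ⟨d, hd⟩ := IsLocalizedModule.exists_of_eq (S := M) hgc
  have hdc : (d : R) • c ∈ strictClosure R S := by
    rw [mem_strictClosure_iff, TensorProduct.tmul_smul]
    exact hd
  obtain ⟨a, ha⟩ := Algebra.mem_bot.1 (h ▸ hdc)
  have hx_eq : algebraMap R S' a = algebraMap R S' (d * t) * x := calc
    algebraMap R S' a = algebraMap S S' ((d : R) • c) := by
      rw [← ha, ← IsScalarTower.algebraMap_apply]
    _ = (d : R) • g c := map_smul g _ _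
    _ = algebraMap R S' (d * t) * x := by
      rw [← hc, Submonoid.smul_def, smul_smul, Algebra.smul_def]
  have hunit : IsUnit (algebraMap R S' (d * t)) := by
    rw [IsScalarTower.algebraMap_apply R R' S']
    exact (IsLocalization.map_units R' (d * t)).map _
  refine Algebra.mem_bot.2 ⟨IsLocalization.mk' R' a (d * t), hunit.mul_left_cancel ?_⟩
  rw [← hx_eq, IsScalarTower.algebraMap_apply R R' S', ← map_mul]
  exact (congrArg _ (IsLocalization.mk'_spec' R' a (d * t))).trans
    (IsScalarTower.algebraMap_apply R R' S' a).symm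

/-- The `R`-algebra map `Q(R) → Q(R')` between total rings of fractions, which exists as soon as
`R → R'` preserves non-zerodivisors. -/
noncomputable def fractionRingMap {R R' : Type*} [CommRing R] [CommRing R'] [Algebra R R']
    (h : R⁰ ≤ R'⁰.comap (algebraMap R R')) : FractionRing R →ₐ[R] FractionRing R' :=
  IsLocalization.liftAlgHom (M := R⁰) (f := Algebra.ofId R (FractionRing R')) fun s => by
    rw [Algebra.ofId_apply, IsScalarTower.algebraMap_apply R R' (FractionRing R')]
    exact IsLocalization.map_units _ (⟨_, h s.2⟩ : R'⁰)

theorem isLocalization_fractionRing {R R' : Type*} [CommRing R] [CommRing R'] [Algebra R R']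
    [IsNoetherianRing R] (M : Submonoid R) [IsLocalization M R']
    (hR : associatedPrimes R R ⊆ minimalPrimes R)
    [Algebra (FractionRing R) (FractionRing R')]
    [IsScalarTower R (FractionRing R) (FractionRing R')] :
    IsLocalization (Algebra.algebraMapSubmonoid (FractionRing R) M) (FractionRing R') :=
  have : IsLocalization (Algebra.algebraMapSubmonoid R' R⁰) (FractionRing R') := by
    refine isLocalization_of_le_of_exists_mul_mem (FractionRing R') (N := R'⁰)
      (Submonoid.map_le_iff_le_comap.2 (IsLocalization.nonZeroDivisors_le_comap M R'))
      fun w hw => ?_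
    obtain ⟨s, hs, hsw⟩ := exists_mem_nonZeroDivisors_algebraMap_mem_span M hR hw
    obtain ⟨m, hm⟩ := Ideal.mem_span_singleton'.1 hsw
    exact ⟨m, s, hs, hm.symm⟩
  IsLocalization.commutes (FractionRing R) R' (FractionRing R') R⁰ M

theorem IsStrictlyClosed.of_isLocalization {R R' : Type*} [CommRing R] [CommRing R'] [Algebra R R']
    [IsNoetherianRing R] (M : Submonoid R) [IsLocalization M R']
    (hR : associatedPrimes R R ⊆ minimalPrimes R) (h : IsStrictlyClosed R) :
    IsStrictlyClosed R' := by
  let φ := fractionRingMap (IsLocalization.nonZeroDivisors_le_comap M R')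
  let _ : Algebra (FractionRing R) (FractionRing R') := φ.toRingHom.toAlgebra
  have : IsScalarTower R (FractionRing R) (FractionRing R') := .of_algHom φ
  have := isLocalization_fractionRing (R' := R') M hR
  let ψ := integralClosureMap (R' := R') φ
  let _ : Algebra (integralClosure R (FractionRing R)) (integralClosure R' (FractionRing R')) :=
    ψ.toRingHom.toAlgebra
  have : IsScalarTower R (integralClosure R (FractionRing R))
    (integralClosure R' (FractionRing R')) := .of_algHom ψ
  have : IsScalarTower (integralClosure R (FractionRing R))
    (integralClosure R' (FractionRing R')) (FractionRing R') := .of_algebraMap_eq fun _ => rfl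
  have := IsLocalization.integralClosure (S := FractionRing R) (Rf := R') (Sf := FractionRing R') M
  exact isStrictlyClosed_iff.2 (strictClosure_eq_bot_of_isLocalization M (isStrictlyClosed_iff.1 h))

theorem IsStrictlyClosed.exists_algebraMap_eq_fractionRingMap {R R' : Type*} [CommRing R]
    [CommRing R'] [Algebra R R'] (h : R⁰ ≤ R'⁰.comap (algebraMap R R')) (hR' : IsStrictlyClosed R')
    {x : integralClosure R (FractionRing R)}
    (hx : x ∈ strictClosure R (integralClosure R (FractionRing R))) :
    ∃ a : R', algebraMap R' (FractionRing R') a = fractionRingMap h x := by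
  have hx' := strictClosure_le_restrictScalars R' <|
    map_mem_strictClosure (integralClosureMap (R' := R') (fractionRingMap h)) hx
  rw [isStrictlyClosed_iff.1 hR'] at hx'
  obtain ⟨a, ha⟩ := Algebra.mem_bot.1 hx'
  exact ⟨a, congrArg Subtype.val ha⟩

theorem algebraMap_mem_map_span_singleton_iff {R R' : Type*} [CommRing R] [CommRing R']
    [Algebra R R'] (h : R⁰ ≤ R'⁰.comap (algebraMap R R')) (y : R) (s : R⁰) :
    algebraMap R R' y ∈ (Ideal.span {(s : R)}).map (algebraMap R R') ↔
      ∃ a : R', algebraMap R' (FractionRing R') a =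
        fractionRingMap h (IsLocalization.mk' (FractionRing R) y s) := by
  have hs : IsUnit (algebraMap R (FractionRing R') s) := by
    rw [IsScalarTower.algebraMap_apply R R' (FractionRing R')]
    exact IsLocalization.map_units _ (⟨_, h s.2⟩ : R'⁰)
  have hys : algebraMap R (FractionRing R') s *
      fractionRingMap h (IsLocalization.mk' (FractionRing R) y s) =
        algebraMap R (FractionRing R') y := by
    rw [← (fractionRingMap h).commutes, ← map_mul, IsLocalization.mk'_spec', AlgHom.commutes]
  rw [Ideal.map_span, Set.image_singleton, Ideal.mem_span_singleton']
  refine exists_congr fun a => ?_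
  rw [← (IsFractionRing.injective R' (FractionRing R')).eq_iff, map_mul, mul_comm,
    ← IsScalarTower.algebraMap_apply, ← IsScalarTower.algebraMap_apply, ← hys,
    hs.mul_right_inj]

theorem SerreSCondition.isStrictlyClosed_of_localization {R : Type*} [CommRing R]
    [IsNoetherianRing R] {n : ℕ} (hR : SerreSCondition R n) (hn : 2 ≤ n)
    (h : ∀ (P : Ideal R) [P.IsPrime], ringKrullDim (Localization.AtPrime P) = 1 →
      IsStrictlyClosed (Localization.AtPrime P)) : IsStrictlyClosed R := by
  refine isStrictlyClosed_iff.2 (eq_bot_iff.2 fun x hx => ?_)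
  obtain ⟨y, s, hys⟩ := IsLocalization.exists_mk'_eq R⁰ (x : FractionRing R)
  have hy : y ∈ Ideal.span {(s : R)} := mem_of_forall_mem_associatedPrimes fun P _ hP =>
    (algebraMap_mem_map_span_singleton_iff
      (IsLocalization.nonZeroDivisors_le_comap P.primeCompl _) y s).2 <| hys ▸
        (h P (hR.ringKrullDim_eq_one hn s.2 hP)).exists_algebraMap_eq_fractionRingMap _ hx
  obtain ⟨a, rfl⟩ := Ideal.mem_span_singleton.1 hy
  exact Algebra.mem_bot.2 ⟨a, Subtype.ext (hys ▸ (IsLocalization.mk'_mul_cancel_left a s).symm)⟩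

end Localization

section StrictlyClosedImpliesArf

theorem exists_aeval_eq_zero_coeff_eq_one {R K : Type*} [CommRing R] [IsNoetherianRing R]
    [IsLocalRing R] [Ring.KrullDimLE 1 R] [CommRing K] [Algebra R K] [IsLocalization R⁰ K] {a : R}
    (ha : a ∈ IsLocalRing.maximalIdeal R) (ha₀ : a ∈ R⁰) (q : K) :
    ∃ f : R[X], aeval q f = 0 ∧ ∃ j, f.coeff j = 1 := by
  by_contra! hcon
  set m := IsLocalRing.maximalIdeal R
  let J := RingHom.ker (aeval (R := R) q)
  have hJm : J ≤ m.map C := by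
    refine fun f hf => Ideal.mem_map_C_iff.2 fun j => by_contra fun hj => ?_
    obtain ⟨c, hc⟩ := (IsLocalRing.notMem_maximalIdeal.1 hj).exists_left_inv
    exact hcon (C c * f) (J.mul_mem_left _ hf) j (by rw [coeff_C_mul, hc])
  have : (m.map C).IsPrime := Ideal.isPrime_map_C_of_isPrime
  have hJ : (m.map C).height ≤ J.height := by
    obtain ⟨y, c, rfl⟩ := IsLocalization.exists_mk'_eq R⁰ q
    have hker : C (c : R) * X - C y ∈ J := by simp [J, RingHom.mem_ker]
    have hreg : C (c : R) * X - C y ∈ R[X]⁰ :=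
      mem_nonzeroDivisors_of_coeff_mem 1 (by simp [coeff_C])
    have hm : m.height ≤ 1 := by
      have h := (IsLocalRing.maximalIdeal_height_eq_ringKrullDim (R := R)).trans_le
        (Ring.krullDimLE_iff.1 ‹Ring.KrullDimLE 1 R›)
      exact_mod_cast h
    calc (m.map C).height = m.height := height_map_C m
      _ ≤ 1 := hm
      _ ≤ (Ideal.span {C (c : R) * X - C y}).height :=
        Ideal.one_le_height_span_singleton_of_mem_nonZeroDivisors hreg
      _ ≤ J.height := Ideal.height_mono ((Ideal.span_singleton_le_iff_mem _).2 hker)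
  obtain ⟨g, hg, hag⟩ := Ideal.exists_mul_mem_of_mem_minimalPrimes
    (Ideal.mem_minimalPrimes_of_height_le hJm hJ) (Ideal.mem_map_of_mem C ha)
  refine hg ((IsLocalization.map_units K (⟨a, ha₀⟩ : R⁰)).mul_right_eq_zero.1 ?_)
  simpa [J, RingHom.mem_ker] using hag

theorem isIntegral_pow_mul_aeval {R S : Type*} [CommRing R] [IsNoetherianRing R] [CommRing S]
    [Algebra R S] {q : S} {p t : R[X]} {i : ℕ} (ht : t.degree < i)
    (h : aeval q (p * X ^ i + t) = 0) {e : ℕ} (he : e ≤ 1) : IsIntegral R (q ^ e * aeval q p) := by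
  classical
  set d := p.natDegree + i + 1 with hd
  let N := (degreeLT R d).map (aeval q).toLinearMap
  have hN {g : R[X]} (hg : ∀ m, d ≤ m → g.coeff m = 0) : aeval q g ∈ N :=
    Submodule.mem_map_of_mem (mem_degreeLT.2 ((degree_lt_iff_coeff_zero g d).2 hg))
  rw [degree_lt_iff_coeff_zero] at ht
  have hp {m : ℕ} (hm : p.natDegree < m) : p.coeff m = 0 := coeff_eq_zero_of_natDegree_lt hm
  have hpow (k : ℕ) (hk : k < d) : q ^ e * aeval q p * q ^ k ∈ N := by
    rcases lt_or_ge (k + e) i with hi | hi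
    · have h' : q ^ e * aeval q p * q ^ k = aeval q (p * X ^ (k + e)) := by
        rw [map_mul, map_pow, aeval_X]; ring
      exact h' ▸ hN fun m hm => by grind [coeff_mul_X_pow']
    · obtain ⟨l, hl⟩ := Nat.exists_eq_add_of_le hi
      have hqkl : q ^ k * q ^ e = q ^ i * q ^ l := by rw [← pow_add, ← pow_add, hl]
      have h' : q ^ e * aeval q p * q ^ k = aeval q (-t * X ^ l) := by
        rw [← sub_eq_zero, ← mul_zero (q ^ l), ← h]
        simp only [map_add, map_mul, map_neg, map_pow, aeval_X]
        linear_combination aeval q p * hqkl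
      exact h' ▸ hN fun m hm => by grind [coeff_mul_X_pow', coeff_neg]
  refine isIntegral_of_forall_mul_mem (u := 1) (N := N) (Submodule.FG.map _ .of_finite)
    (by simpa using hN (g := 1) (by grind [coeff_one])) (one_mem _) ?_
  suffices N ≤ N.comap (LinearMap.mulLeft R (q ^ e * aeval q p)) from fun y hy => this hy
  rw [Submodule.map_le_iff_le_comap, degreeLT_eq_span_X_pow, Submodule.span_le]
  intro g hg
  obtain ⟨k, hk, rfl⟩ := Finset.mem_image.1 hg
  simpa [mul_assoc] using hpow k (Finset.mem_range.1 hk)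

theorem exists_isIntegral_add_mul_eq_one {R S : Type*} [CommRing R] [IsNoetherianRing R]
    [Nontrivial R] [CommRing S] [Algebra R S] {q : S} {f : R[X]} (hf : aeval q f = 0) {j : ℕ}
    (hj : f.coeff j = 1) :
    ∃ u v : S, IsIntegral R u ∧ IsIntegral R (q * u) ∧ IsIntegral R v ∧ IsIntegral R (q * v) ∧
      u + q * v = 1 := by
  obtain ⟨p, t, ht, rfl⟩ : ∃ p t : R[X], t.degree < j ∧ p * X ^ j + t = f :=
    ⟨f /ₘ X ^ j, f %ₘ X ^ j, degree_X_pow (R := R) j ▸ degree_modByMonic_lt f (monic_X_pow j),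
      by rw [add_comm, mul_comm, modByMonic_add_div f]⟩
  have hp₀ : p.coeff 0 = 1 := by
    simpa [coeff_mul_X_pow', coeff_eq_zero_of_degree_lt ht] using hj
  have hp : X * divX p + 1 = p := by rw [← C_1, ← hp₀, X_mul_divX_add]
  have ht' : (X ^ j + t).degree < ((j + 1 : ℕ) : WithBot ℕ) := by
    refine (degree_add_le_of_degree_le (degree_X_pow_le j) ht.le).trans_lt ?_
    exact WithBot.coe_lt_coe.2 j.lt_succ_self
  have hf' : aeval q (divX p * X ^ (j + 1) + (X ^ j + t)) = 0 := by
    rw [← hf]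
    conv_rhs => rw [← hp]
    ring_nf
  refine ⟨aeval q p, -aeval q (divX p), ?_, ?_, ?_, ?_, ?_⟩
  · simpa using isIntegral_pow_mul_aeval ht hf zero_le_one
  · simpa using isIntegral_pow_mul_aeval ht hf le_rfl
  · simpa using (isIntegral_pow_mul_aeval ht' hf' zero_le_one).neg
  · simpa using (isIntegral_pow_mul_aeval ht' hf' le_rfl).neg
  · simpa [← sub_eq_add_neg, sub_eq_iff_eq_add'] using (congrArg (aeval q) hp).symm

theorem exists_mem_pow_forall_mul_one_sub_mem {S : Type*} [CommRing S] (J : Ideal S)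
    [IsArtinianRing (S ⧸ J)] (K : Ideal S) :
    ∃ n, n ≠ 0 ∧ ∃ ε ∈ K ^ n, ∀ x ∈ K ^ n, x * (1 - ε) ∈ J := by
  let π := Ideal.Quotient.mk J
  obtain ⟨n, hn⟩ := IsArtinian.monotone_stabilizes (R := S ⧸ J) (M := S ⧸ J)
    ⟨fun k => OrderDual.toDual (K.map π ^ k), fun _ _ h => Ideal.pow_le_pow_right h⟩
  replace hn (m : ℕ) (hm : n ≤ m) : K.map π ^ n = K.map π ^ m := hn m hm
  have hidem : IsIdempotentElem ((K ^ (n + 1)).map π) := by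
    rw [IsIdempotentElem, Ideal.map_pow, ← pow_add, ← hn (n + 1) (by lia), ← hn _ (by lia)]
  obtain ⟨e, he, hKe⟩ := (Ideal.isIdempotentElem_iff_of_fg _ (IsNoetherian.noetherian _)).1 hidem
  have heK : e ∈ (K ^ (n + 1)).map π := hKe.ge (Ideal.mem_span_singleton_self e)
  obtain ⟨ε, hε, rfl⟩ := (Ideal.mem_map_iff_of_surjective π Ideal.Quotient.mk_surjective).1 heK
  refine ⟨n + 1, n.succ_ne_zero, ε, hε, fun x hx => Ideal.Quotient.eq_zero_iff_mem.1 ?_⟩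
  obtain ⟨c, hc⟩ := Ideal.mem_span_singleton'.1 (hKe.le (Ideal.mem_map_of_mem π hx))
  change π (x * (1 - ε)) = 0
  rw [map_mul, map_sub, map_one, ← hc, mul_assoc, mul_sub, he.eq, mul_one, sub_self, mul_zero]

theorem span_singleton_mul_pow_le {S : Type*} [CommRing S] {z : S} {K L : Ideal S}
    (h : Ideal.span {z} * K ≤ Ideal.span {z} * L) (n : ℕ) :
    Ideal.span {z} * K ^ n ≤ Ideal.span {z} * L ^ n := by
  induction n with
  | zero => simp
  | succ n ih =>
    calc Ideal.span {z} * K ^ (n + 1) = Ideal.span {z} * K ^ n * K := by rw [pow_succ, mul_assoc]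
      _ ≤ Ideal.span {z} * L ^ n * K := mul_le_mul_left ih K
      _ = Ideal.span {z} * K * L ^ n := mul_right_comm ..
      _ ≤ Ideal.span {z} * L * L ^ n := mul_le_mul_left h _
      _ = Ideal.span {z} * L ^ (n + 1) := by rw [pow_succ', mul_assoc]

variable {R C : Type*} [CommRing R] [CommRing C] [Algebra R C]

theorem span_singleton_mul_map_le {Θ : Type*} [CommRing Θ] [Algebra R Θ] (f₁ f₂ : C →ₐ[R] Θ)
    {a y z : R} (hz : z = a ∨ z = y) {K : Ideal C}
    (hK : ∀ k ∈ K, algebraMap R C a ∣ algebraMap R C y * k) {u v v' : C} (hu : u ∈ K) (hv : v ∈ K)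
    (huv : u + v' = 1) (hv' : algebraMap R C y * v = algebraMap R C a * v') :
    Ideal.span {algebraMap R Θ z} * K.map f₁ ≤ Ideal.span {algebraMap R Θ z} * K.map f₂ := by
  rw [Ideal.map, Ideal.span_mul_span', Ideal.span_le]
  rintro _ ⟨_, rfl, _, ⟨k, hk, rfl⟩, rfl⟩
  obtain ⟨k', hk'⟩ := hK k hk
  have hk₁ : algebraMap R Θ y * f₁ k = algebraMap R Θ a * f₁ k' := by
    simpa using congrArg f₁ hk'
  have hv₂ : algebraMap R Θ y * f₂ v = algebraMap R Θ a * f₂ v' := by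
    simpa using congrArg f₂ hv'
  have hswap : algebraMap R Θ z * (f₁ k * f₂ v') = algebraMap R Θ z * (f₁ k' * f₂ v) := by
    rcases hz with rfl | rfl
    · linear_combination f₂ v * hk₁ - f₁ k * hv₂
    · linear_combination f₂ v' * hk₁ - f₁ k' * hv₂
  refine Ideal.mem_span_singleton_mul.2 ⟨f₁ k * f₂ u + f₁ k' * f₂ v, add_mem ?_ ?_, ?_⟩
  · exact Ideal.mul_mem_left _ _ (Ideal.mem_map_of_mem f₂ hu)
  · exact Ideal.mul_mem_left _ _ (Ideal.mem_map_of_mem f₂ hv)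
  · rw [mul_add, ← hswap, ← mul_add, ← mul_add, ← map_add, huv, map_one, mul_one]

theorem algebraMap_dvd_mul_one_sub {Θ : Type*} [CommRing Θ] [Algebra R Θ] {f₁ f₂ : C →ₐ[R] Θ}
    {z b : R} {K : Ideal C}
    (hK : Ideal.span {algebraMap R Θ z} * K.map f₁ ≤ Ideal.span {algebraMap R Θ z} * K.map f₂)
    {n : ℕ} {ε : C} (hε : ε ∈ K ^ n)
    (hKε : ∀ x ∈ K ^ n, x * (1 - ε) ∈ Ideal.span {algebraMap R C b}) :
    algebraMap R Θ b ∣ algebraMap R Θ z * f₁ ε * (1 - f₂ ε) := by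
  obtain ⟨x, hx, hzx⟩ := Ideal.mem_span_singleton_mul.1 <| span_singleton_mul_pow_le hK n <|
    Ideal.mul_mem_mul (Ideal.mem_span_singleton_self _)
      (Ideal.map_pow f₁ K n ▸ Ideal.mem_map_of_mem f₁ hε)
  have hle : (K ^ n * Ideal.span {1 - ε}).map f₂ ≤ Ideal.span {algebraMap R Θ b} := by
    have hb : Ideal.span {algebraMap R Θ b} = (Ideal.span {algebraMap R C b}).map f₂ := by
      rw [Ideal.map_span, Set.image_singleton, f₂.commutes]
    rw [hb]
    refine Ideal.map_mono (Ideal.mul_le.2 fun x hx w hw => ?_)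
    obtain ⟨c, rfl⟩ := Ideal.mem_span_singleton.1 hw
    rw [← mul_assoc]
    exact Ideal.mul_mem_right _ _ (hKε x hx)
  rw [← hzx, mul_assoc]
  refine Dvd.dvd.mul_left (Ideal.mem_span_singleton.1 (hle ?_)) _
  rw [Ideal.map_mul, Ideal.map_pow]
  refine Ideal.mul_mem_mul hx ?_
  simpa using Ideal.mem_map_of_mem f₂ (Ideal.mem_span_singleton_self (1 - ε))

theorem mem_strictClosure_of_algebraMap_dvd {b : R}
    (hb : ∀ c : C, algebraMap R C b * c ∈ (⊥ : Subalgebra R C)) {w : C}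
    (hw : algebraMap R (C ⊗[R] C) b ∣ w ⊗ₜ[R] 1 - 1 ⊗ₜ[R] w) : w ∈ strictClosure R C := by
  have hbot (ω : C ⊗[R] C) : b • ω ∈ (⊥ : Subalgebra R (C ⊗[R] C)) := by
    induction ω using TensorProduct.induction_on with
    | zero => simp
    | add x y hx hy => simpa using add_mem hx hy
    | tmul c d =>
      obtain ⟨r, hr⟩ := Algebra.mem_bot.1 (hb c)
      obtain ⟨s, hs⟩ := Algebra.mem_bot.1 (hb (c * d))
      refine Algebra.mem_bot.2 ⟨s, ?_⟩
      calc algebraMap R (C ⊗[R] C) s = 1 ⊗ₜ (algebraMap R C r * d) := by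
            rw [hr, mul_assoc, ← hs, Algebra.TensorProduct.algebraMap_apply']
        _ = algebraMap R C r ⊗ₜ d := by
            rw [← Algebra.smul_def, ← TensorProduct.smul_tmul, Algebra.algebraMap_eq_smul_one]
        _ = b • (c ⊗ₜ d) := by rw [hr, ← Algebra.smul_def, TensorProduct.smul_tmul']
  obtain ⟨ω, hω⟩ := hw
  obtain ⟨r, hr⟩ := Algebra.mem_bot.1 (hbot ω)
  rw [← Algebra.smul_def, ← hr] at hω
  have hr₀ : algebraMap R C r = 0 := by
    simpa using (congrArg (Algebra.TensorProduct.lmul' (S := C) R) hω).symm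
  rw [mem_strictClosure_iff, ← sub_eq_zero, hω, Algebra.TensorProduct.algebraMap_apply, hr₀,
    TensorProduct.zero_tmul]

theorem smul_mem_strictClosure {a y z : R} (hz : z = a ∨ z = y) {K : Ideal C}
    (hK : ∀ k ∈ K, algebraMap R C a ∣ algebraMap R C y * k) {u v v' : C} (hu : u ∈ K) (hv : v ∈ K)
    (huv : u + v' = 1) (hv' : algebraMap R C y * v = algebraMap R C a * v') {b : R}
    (hb : ∀ c : C, algebraMap R C b * c ∈ (⊥ : Subalgebra R C)) {n : ℕ} {ε : C} (hε : ε ∈ K ^ n)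
    (hKε : ∀ x ∈ K ^ n, x * (1 - ε) ∈ Ideal.span {algebraMap R C b}) :
    z • ε ∈ strictClosure R C := by
  let f₁ : C →ₐ[R] C ⊗[R] C := Algebra.TensorProduct.includeLeft
  let f₂ : C →ₐ[R] C ⊗[R] C := Algebra.TensorProduct.includeRight
  have h₁₂ := algebraMap_dvd_mul_one_sub
    (span_singleton_mul_map_le f₁ f₂ hz hK hu hv huv hv') hε hKε
  have h₂₁ := algebraMap_dvd_mul_one_sub
    (span_singleton_mul_map_le f₂ f₁ hz hK hu hv huv hv') hε hKε
  refine mem_strictClosure_of_algebraMap_dvd hb ?_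
  convert dvd_sub h₁₂ h₂₁ using 1
  have hf₁ : (z • ε) ⊗ₜ[R] 1 = algebraMap R (C ⊗[R] C) z * f₁ ε := by
    rw [← Algebra.smul_def, ← map_smul]; rfl
  have hf₂ : 1 ⊗ₜ[R] (z • ε) = algebraMap R (C ⊗[R] C) z * f₂ ε := by
    rw [← Algebra.smul_def, ← map_smul]; rfl
  rw [hf₁, hf₂]
  ring

theorem dvd_of_forall_mul_one_sub_mem {a y u v v' ε : C} {K J : Ideal C} {n : ℕ} (hn : n ≠ 0)
    (hK : ∀ k ∈ K, a ∣ y * k) (hu : u ∈ K) (hv : v ∈ K) (huv : u + v' = 1) (hv' : y * v = a * v')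
    (hε : ε ∈ K ^ n) (hKε : ∀ x ∈ K ^ n, x * (1 - ε) ∈ J) (hJ : J ≤ Ideal.jacobson ⊥) :
    ∃ k ∈ K, (a * ε + y * (1 - ε)) * k = a := by
  let L := (Ideal.span {a * ε + y * (1 - ε)} * K).colon {a}
  have hL {k k' : C} (hk : k ∈ K) (hk' : y * k = a * k') : k * ε + k' * (1 - ε) ∈ L :=
    Submodule.mem_colon_singleton.2 (Ideal.mem_span_singleton_mul.2 ⟨k, hk, by
      rw [smul_eq_mul]; linear_combination (1 - ε) * hk'⟩)
  suffices h : L = ⊤ by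
    simpa [L, Submodule.mem_colon_singleton, Ideal.mem_span_singleton_mul] using
      (Ideal.eq_top_iff_one L).1 h
  by_contra h
  obtain ⟨M, hM, hLM⟩ := Ideal.exists_le_maximal L h
  have hprime := hM.isPrime
  have hJM : J ≤ M := hJ.trans (sInf_le ⟨bot_le, hM⟩)
  by_cases hKM : K ≤ M
  · have hεM : ε ∈ M := hKM (Ideal.pow_le_self hn hε)
    have hv'M : v' ∈ M := by
      convert M.sub_mem (hLM (hL hv hv')) (M.mul_mem_left (v - v') hεM) using 1
      ring
    exact (Ideal.ne_top_iff_one M).1 hM.ne_top (huv ▸ M.add_mem (hKM hu) hv'M)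
  · obtain ⟨k, hk, hkM⟩ := SetLike.not_le_iff_exists.1 hKM
    obtain ⟨k', hk'⟩ := hK k hk
    have hεM : 1 - ε ∈ M := ((hprime.mem_or_mem (hJM (hKε _ (Ideal.pow_mem_pow hk n)))).resolve_left
      fun h => hkM (hprime.mem_of_pow_mem n h))
    refine hkM ?_
    convert M.sub_mem (hLM (hL hk hk')) (M.mul_mem_left (k' - k) hεM) using 1
    ring

theorem exists_subalgebra_finite_add_eq_one [IsNoetherianRing R] [IsLocalRing R]
    [Ring.KrullDimLE 1 R] {a : R} (ha : a ∈ IsLocalRing.maximalIdeal R) (ha₀ : a ∈ R⁰) (y : R) :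
    ∃ B : Subalgebra R (FractionRing R), Module.Finite R B ∧ ∃ u u' v v' : B,
      algebraMap R B y * u = algebraMap R B a * u' ∧
        algebraMap R B y * v = algebraMap R B a * v' ∧ u + v' = 1 := by
  let q := IsLocalization.mk' (FractionRing R) y (⟨a, ha₀⟩ : R⁰)
  have hq : algebraMap R (FractionRing R) y = algebraMap R (FractionRing R) a * q :=
    (IsLocalization.mk'_spec' _ y (⟨a, ha₀⟩ : R⁰)).symm
  obtain ⟨f, hf, j, hj⟩ := exists_aeval_eq_zero_coeff_eq_one ha ha₀ q
  obtain ⟨u, v, hu, hqu, hv, hqv, huv⟩ := exists_isIntegral_add_mul_eq_one hf hj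
  let s : Set (FractionRing R) := {u, q * u, v, q * v}
  have hs : ∀ x ∈ s, IsIntegral R x := by
    rintro x (rfl | rfl | rfl | rfl) <;> assumption
  have hmem {x : FractionRing R} (hx : x ∈ s) : x ∈ Algebra.adjoin R s := Algebra.subset_adjoin hx
  refine ⟨Algebra.adjoin R s, Algebra.finite_adjoin_of_finite_of_isIntegral (Set.toFinite s) hs,
    ⟨u, hmem (by simp [s])⟩, ⟨q * u, hmem (by simp [s])⟩, ⟨v, hmem (by simp [s])⟩,
    ⟨q * v, hmem (by simp [s])⟩, Subtype.ext ?_, Subtype.ext ?_, Subtype.ext huv⟩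
  · exact (congrArg (· * u) hq).trans (mul_assoc ..)
  · exact (congrArg (· * v) hq).trans (mul_assoc ..)

theorem exists_mem_maximalIdeal_mul_mem_bot [IsLocalRing R] {a : R}
    (ha : a ∈ IsLocalRing.maximalIdeal R) (ha₀ : a ∈ R⁰) (B : Subalgebra R (FractionRing R))
    [Module.Finite R B] : ∃ b ∈ IsLocalRing.maximalIdeal R, b ∈ R⁰ ∧
      ∀ c : B, algebraMap R B b * c ∈ (⊥ : Subalgebra R B) := by
  obtain ⟨d, hd, h⟩ := FractionalIdeal.isFractional_of_fg (S := R⁰)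
    (Module.Finite.iff_fg (N := Subalgebra.toSubmodule B).1 ‹_›)
  refine ⟨a * d, Ideal.mul_mem_right _ _ ha, mul_mem ha₀ hd, fun c => ?_⟩
  obtain ⟨r, hr⟩ := h c c.2
  have hdc : algebraMap R B r = d • c := Subtype.ext hr
  rw [map_mul, mul_assoc, ← Algebra.smul_def d, ← hdc, ← map_mul]
  exact Subalgebra.algebraMap_mem ⊥ (a * r)

theorem IsStrictlyClosed.exists_algebraMap_eq_smul (hR : IsStrictlyClosed R) {I : Ideal R}
    (hI : I.IsIntegrallyClosedIdeal) {B : Subalgebra R (FractionRing R)} [Algebra.IsIntegral R B]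
    {z : R} (hz : z ∈ I) {ε : B} (h : z • ε ∈ strictClosure R B) :
    ∃ r ∈ I, algebraMap R B r = z • ε := by
  have hint (c : B) : IsIntegral R (c : FractionRing R) :=
    (Algebra.IsIntegral.isIntegral c).map B.val
  have hB : B ≤ integralClosure R (FractionRing R) := fun c hc => hint ⟨c, hc⟩
  obtain ⟨r, hr⟩ := Algebra.mem_bot.1 ((isStrictlyClosed_iff.1 hR).le
    (map_mem_strictClosure (Subalgebra.inclusion hB) h))
  have hr' : algebraMap R (FractionRing R) r = algebraMap R (FractionRing R) z * ε := by
    rw [← Algebra.smul_def]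
    exact congrArg Subtype.val hr
  exact ⟨r, principalClosure_le_of_isIntegrallyClosedIdeal hI hz
    (mem_principalClosure_iff.2 ⟨ε, hint ε, hr'⟩),
    Subtype.ext (hr'.trans (Algebra.smul_def _ _).symm)⟩

theorem span_singleton_algebraMap_le_jacobson_bot [IsLocalRing R] [Algebra.IsIntegral R C] {b : R}
    (hb : b ∈ IsLocalRing.maximalIdeal R) :
    Ideal.span {algebraMap R C b} ≤ Ideal.jacobson ⊥ := by
  refine le_sInf fun M ⟨_, hM⟩ => (Ideal.span_singleton_le_iff_mem M).2 ?_
  exact (IsLocalRing.eq_maximalIdeal (Ideal.IsMaximal.under R M)).ge hb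

theorem isArtinianRing_quotient_span_singleton_algebraMap [IsNoetherianRing R]
    [Ring.KrullDimLE 1 R] [Module.Finite R C] {b : R} (hb : b ∈ R⁰) :
    IsArtinianRing (C ⧸ Ideal.span {algebraMap R C b}) := by
  have := isArtinianRing_quotient_span_singleton hb
  let J := (Ideal.span {b}).map (algebraMap R C)
  let : Algebra (R ⧸ Ideal.span {b}) (C ⧸ J) := Ideal.Quotient.algebraQuotientOfLEComap
    Ideal.le_comap_map
  have : IsScalarTower R (R ⧸ Ideal.span {b}) (C ⧸ J) := .of_algebraMap_eq fun _ => rfl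
  have : Module.Finite (R ⧸ Ideal.span {b}) (C ⧸ J) := .of_restrictScalars_finite R _ _
  have hJ : J = Ideal.span {algebraMap R C b} := by
    rw [← Set.image_singleton, ← Ideal.map_span]
  exact hJ ▸ IsArtinianRing.of_finite (R ⧸ Ideal.span {b}) (C ⧸ J)

theorem mem_principalClosure_of_algebraMap_mul_eq {B : Subalgebra R (FractionRing R)}
    [Algebra.IsIntegral R B] {a x : R} {k : B} (h : algebraMap R B a * k = algebraMap R B x) :
    x ∈ principalClosure a :=
  mem_principalClosure_iff.2 ⟨k, (Algebra.IsIntegral.isIntegral k).map B.val,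
    (congrArg Subtype.val h).symm⟩

theorem mem_nonZeroDivisors_of_algebraMap_mul_eq {B : Subalgebra R (FractionRing R)} {a x : R}
    {k : B} (hx : x ∈ R⁰) (h : algebraMap R B a * k = algebraMap R B x) : a ∈ R⁰ := by
  have h' : algebraMap R (FractionRing R) a * k = algebraMap R (FractionRing R) x :=
    congrArg Subtype.val h
  refine mem_nonZeroDivisors_of_isUnit_algebraMap (isUnit_of_mul_isUnit_left (y := (k : _)) ?_)
  exact h' ▸ IsLocalization.map_units (FractionRing R) (⟨x, hx⟩ : R⁰)

theorem IsStrictlyClosed.exists_mem_principalClosure_pair [IsNoetherianRing R] [IsLocalRing R]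
    [Ring.KrullDimLE 1 R] (hR : IsStrictlyClosed R) {I : Ideal R} (hI : I.IsIntegrallyClosedIdeal)
    {a y : R} (ha : a ∈ I) (ha₀ : a ∈ R⁰) (hy : y ∈ I) :
    ∃ a' ∈ I, a' ∈ R⁰ ∧ a ∈ principalClosure a' ∧ y ∈ principalClosure a' := by
  by_cases ham : a ∈ IsLocalRing.maximalIdeal R
  swap
  · have htop : principalClosure a = ⊤ := by
      rw [principalClosure, Ideal.span_singleton_eq_top.2
        ((IsLocalRing.notMem_maximalIdeal.1 ham).map _), Ideal.comap_top]
    exact ⟨a, ha, ha₀, by simp [htop]⟩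
  obtain ⟨B, _, u, u', v, v', hu, hv, huv⟩ := exists_subalgebra_finite_add_eq_one ham ha₀ y
  obtain ⟨b, hbm, hb₀, hb⟩ := exists_mem_maximalIdeal_mul_mem_bot ham ha₀ B
  let J := Ideal.span {algebraMap R B b}
  let K := (Ideal.span {algebraMap R B a}).colon {algebraMap R B y}
  have hK (k : B) : k ∈ K ↔ algebraMap R B a ∣ algebraMap R B y * k := by
    rw [Submodule.mem_colon_singleton, Ideal.mem_span_singleton, smul_eq_mul, mul_comm]
  have : IsArtinianRing (B ⧸ J) := isArtinianRing_quotient_span_singleton_algebraMap hb₀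
  obtain ⟨n, hn, ε, hε, hKε⟩ := exists_mem_pow_forall_mul_one_sub_mem J K
  have hz {z : R} (hz : z = a ∨ z = y) := smul_mem_strictClosure hz (fun k hk => (hK k).1 hk)
    ((hK u).2 ⟨u', hu⟩) ((hK v).2 ⟨v', hv⟩) huv hv hb hε hKε
  obtain ⟨r, hrI, hr⟩ := hR.exists_algebraMap_eq_smul hI ha (hz (.inl rfl))
  obtain ⟨s, hsI, hs⟩ := hR.exists_algebraMap_eq_smul hI hy (hz (.inr rfl))
  obtain ⟨k, hk, hak⟩ := dvd_of_forall_mul_one_sub_mem hn (fun k hk => (hK k).1 hk)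
    ((hK u).2 ⟨u', hu⟩) ((hK v).2 ⟨v', hv⟩) huv hv hε hKε
    (span_singleton_algebraMap_le_jacobson_bot hbm)
  obtain ⟨k', hk'⟩ := (hK k).1 hk
  have ha' : algebraMap R B a * ε + algebraMap R B y * (1 - ε) = algebraMap R B (r + (y - s)) := by
    rw [map_add, map_sub, hr, hs, Algebra.smul_def, Algebra.smul_def]
    ring
  rw [ha'] at hak
  refine ⟨r + (y - s), I.add_mem hrI (I.sub_mem hy hsI),
    mem_nonZeroDivisors_of_algebraMap_mul_eq ha₀ hak,
    mem_principalClosure_of_algebraMap_mul_eq hak,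
    mem_principalClosure_of_algebraMap_mul_eq (k := k') ?_⟩
  have hreg : IsRegular (algebraMap R (FractionRing R) a) :=
    (IsLocalization.map_units (FractionRing R) (⟨a, ha₀⟩ : R⁰)).isRegular
  have hk'' : algebraMap R B a * (algebraMap R B (r + (y - s)) * k') =
      algebraMap R B a * algebraMap R B y := by
    linear_combination algebraMap R B y * hak - algebraMap R B (r + (y - s)) * hk'
  exact Subtype.ext (hreg.left (congrArg Subtype.val hk''))

theorem IsStrictlyClosed.exists_forall_mem_principalClosure [IsNoetherianRing R] [IsLocalRing R]
    [Ring.KrullDimLE 1 R] (hR : IsStrictlyClosed R) {I : Ideal R} (hI : I.IsIntegrallyClosedIdeal)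
    {x : R} (hx : x ∈ I) (hx₀ : x ∈ R⁰) : ∃ a ∈ I, a ∈ R⁰ ∧ I ≤ principalClosure a := by
  suffices h : ∀ T : Finset R, ↑T ⊆ (I : Set R) →
      ∃ a ∈ I, a ∈ R⁰ ∧ Ideal.span ↑T ≤ principalClosure a by
    obtain ⟨T, rfl⟩ := (isNoetherianRing_iff_ideal_fg R).1 ‹_› I
    exact h T Ideal.subset_span
  classical
  intro T
  induction T using Finset.induction_on with
  | empty => exact fun _ => ⟨x, hx, hx₀, by simp⟩
  | insert y T _ ih =>
    intro hT
    rw [Finset.coe_insert, Set.insert_subset_iff] at hT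
    obtain ⟨a, ha, ha₀, hTa⟩ := ih hT.2
    obtain ⟨a', ha', ha'₀, haa', hya'⟩ := hR.exists_mem_principalClosure_pair hI ha ha₀ hT.1
    refine ⟨a', ha', ha'₀, ?_⟩
    rw [Finset.coe_insert, Ideal.span_insert, sup_le_iff, Ideal.span_singleton_le_iff_mem]
    exact ⟨hya', hTa.trans (principalClosure_le_of_mem haa')⟩

theorem IsStrictlyClosed.isArfRing [IsNoetherianRing R] [IsLocalRing R] [Ring.KrullDimLE 1 R]
    (hR : IsStrictlyClosed R) : IsArfRing R :=
  isArfRing_iff.2 ⟨hR.isWeaklyArfRing, fun _ hI ⟨_, hx, hx₀⟩ =>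
    hR.exists_forall_mem_principalClosure hI hx hx₀⟩

end StrictlyClosedImpliesArf

theorem strictlyClosed_iff_weaklyArf_and_arf_in_ht_one_general (A : Type*) [CommRing A]
    [IsNoetherianRing A] (hS2 : SerreSCondition A 2) :
    IsStrictlyClosed A ↔
      ∀ (P : Ideal A) [P.IsPrime],
        ringKrullDim (Localization.AtPrime P) = 1 → IsArfRing (Localization.AtPrime P) := by
  refine ⟨fun hA P _ hP => ?_, fun hArf => ?_⟩
  · have : Ring.KrullDimLE 1 (Localization.AtPrime P) := Ring.krullDimLE_iff.2 hP.le
    have hloc : IsStrictlyClosed (Localization.AtPrime P) :=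
      hA.of_isLocalization P.primeCompl (hS2.associatedPrimes_subset_minimalPrimes one_le_two)
    exact hloc.isArfRing
  · refine hS2.isStrictlyClosed_of_localization le_rfl fun P _ hP => ?_
    have : Ring.KrullDimLE 1 (Localization.AtPrime P) := Ring.krullDimLE_iff.2 hP.le
    exact (hArf P hP).isStrictlyClosed

/-- For a Noetherian ring `A` satisfying `(S₂)`: `A` is strictly closed in `Ā` iff `A`
is weakly Arf and `A_P` is an Arf ring for every prime `P` of height `1`. -/
theorem strictlyClosed_iff_weaklyArf_and_arf_in_ht_one (A : Type*) [CommRing A]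
    [IsNoetherianRing A] (hS2 : SerreSCondition A 2) :
    IsStrictlyClosed A ↔
      (IsWeaklyArfRing A ∧
        ∀ (P : Ideal A) [P.IsPrime],
          ringKrullDim (Localization.AtPrime P) = 1 →
          IsArfRing (Localization.AtPrime P)) := by
  have hmain := strictlyClosed_iff_weaklyArf_and_arf_in_ht_one_general A hS2
  exact ⟨fun hA => ⟨hA.isWeaklyArfRing, hmain.1 hA⟩, fun h => hmain.2 h.2⟩
end

section
/- Let A be a Noetherian integral domain satisfying Serre's condition (S₂), and assume either that A contains an infinite field or that ht M ≥ 2 for every maximal ideal M of A. Then A is a weakly Arf ring if and only if the polynomial ring A[X₁, X₂, …, X_n] is a weakly Arf ring for every n ≥ 1. -/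
open scoped TensorProduct

/-!
Divisibility by `h ≠ 0` in `A[X₁, …, Xₙ]` is tested at the associated primes `P` of
`A[X₁, …, Xₙ] / (h)` over `A`, and no such `P` has `depth A_P ≥ 2`. Hence `A / P` is infinite at
every `P` that matters: otherwise `P` would be a maximal ideal with finite residue field, where the
depth is at least `2`. Over such a local ring `A_P`, evaluating at elements with pairwise distinct
residues turns integral fractions `y / x`, `z / x` of polynomials into integral fractions over
`A_P`, and Lagrange interpolation recovers the coefficients of `y * z / x` from its values.
-/

section IsIntegralOverSpan

open scoped Polynomial nonZeroDivisors

variable {A B : Type*} [CommRing A] [CommRing B]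

theorem map_scaleRoots_of_monic {p : A[X]} (hp : p.Monic) (x : A) (φ : A →+* B) :
    (p.scaleRoots x).map φ = (p.map φ).scaleRoots (φ x) := by
  cases subsingleton_or_nontrivial B
  · exact Subsingleton.elim _ _
  · exact Polynomial.map_scaleRoots _ _ _ (by simp [hp.leadingCoeff])

/-- `y` is integral over the principal ideal `(x)`: it satisfies an equation
`yⁿ + a₁ x yⁿ⁻¹ + ⋯ + aₙ xⁿ = 0`. Unlike integrality of the fraction `y / x`, this makes sense for
every `x`, so it can be transported along evaluation maps. -/
def IsIntegralOverSpan (x y : A) : Prop :=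
  ∃ p : A[X], p.Monic ∧ (p.scaleRoots x).eval y = 0

namespace IsIntegralOverSpan

theorem map {x y : A} (h : IsIntegralOverSpan x y) (φ : A →+* B) :
    IsIntegralOverSpan (φ x) (φ y) := by
  obtain ⟨p, hp, hroot⟩ := h
  refine ⟨p.map φ, hp.map φ, ?_⟩
  rw [← map_scaleRoots_of_monic hp, Polynomial.eval_map_apply, hroot, map_zero]

theorem mul_mul_left {x y : A} (h : IsIntegralOverSpan x y) (a : A) :
    IsIntegralOverSpan (a * x) (a * y) := by
  obtain ⟨p, hp, hroot⟩ := h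
  refine ⟨p, hp, ?_⟩
  rw [mul_comm a x, Polynomial.scaleRoots_mul, Polynomial.scaleRoots_eval_mul, hroot, mul_zero]

theorem exists_mul_of_isLocalization {M : Submonoid A} (hM : M ≤ A⁰) [Algebra A B]
    [IsLocalization M B] {x : A} {y : B} (h : IsIntegralOverSpan (algebraMap A B x) y) :
    ∃ s ∈ M, ∃ y' : A, algebraMap A B y' = algebraMap A B s * y ∧ IsIntegralOverSpan x y' := by
  obtain ⟨p, hp, hroot⟩ := h
  obtain ⟨c, q, hqp, hq⟩ :
      ∃ (c : M) (q : A[X]), q.map (algebraMap A B) = p.scaleRoots (algebraMap A B c) ∧ q.Monic := by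
    obtain ⟨q, hqp, -, hq⟩ := Polynomial.lifts_and_natDegree_eq_and_monic
      (IsLocalization.scaleRoots_commonDenom_mem_lifts M p (hp.leadingCoeff ▸ one_mem _))
      ((Polynomial.monic_scaleRoots_iff _).2 hp)
    exact ⟨_, q, hqp, hq⟩
  obtain ⟨⟨y', s⟩, hy'⟩ := IsLocalization.surj M y
  have hcy' : algebraMap A B (c * y') = algebraMap A B (c * s) * y := by
    rw [map_mul, ← hy', map_mul]
    ring
  have hmap : ((q.scaleRoots (s : A)).scaleRoots x).map (algebraMap A B) =
      (p.scaleRoots (algebraMap A B x)).scaleRoots (algebraMap A B (c * s)) := by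
    rw [map_scaleRoots_of_monic ((Polynomial.monic_scaleRoots_iff _).2 hq),
      map_scaleRoots_of_monic hq, hqp, ← Polynomial.scaleRoots_mul, ← Polynomial.scaleRoots_mul,
      ← Polynomial.scaleRoots_mul]
    congr 1
    simp only [map_mul]
    ring
  refine ⟨c * s, (c * s).2, c * y', hcy', q.scaleRoots s,
    (Polynomial.monic_scaleRoots_iff _).2 hq, IsLocalization.injective B hM ?_⟩
  rw [← Polynomial.eval_map_apply, hmap, hcy', Polynomial.scaleRoots_eval_mul, hroot, mul_zero,
    map_zero]

end IsIntegralOverSpan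

theorem isIntegral_mk'_iff_isIntegralOverSpan {M : Submonoid A} (hM : M ≤ A⁰) [Algebra A B]
    [IsLocalization M B] (y : A) (x : M) :
    IsIntegral A (IsLocalization.mk' B y x) ↔ IsIntegralOverSpan (x : A) y := by
  refine exists_congr fun p => and_congr_right fun _ => ?_
  have hxu := (IsLocalization.map_units B x).pow p.natDegree
  rw [← (IsLocalization.injective B hM).eq_iff, ← Polynomial.eval₂_at_apply,
    ← IsLocalization.mk'_spec' B y x, Polynomial.scaleRoots_eval₂_mul, map_zero,
    hxu.mul_right_eq_zero]

theorem IsIntegralOverSpan.dvd [IsIntegrallyClosed A] {x y : A} (hx : x ∈ A⁰)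
    (h : IsIntegralOverSpan x y) : x ∣ y := by
  have hint := (isIntegral_mk'_iff_isIntegralOverSpan (B := FractionRing A) le_rfl y ⟨x, hx⟩).2 h
  obtain ⟨c, hc⟩ := IsIntegrallyClosed.isIntegral_iff.1 hint
  refine ⟨c, IsFractionRing.injective A (FractionRing A) ?_⟩
  rw [map_mul, hc, IsLocalization.mk'_spec' (FractionRing A) y ⟨x, hx⟩]

end IsIntegralOverSpan

section IsWeaklyArfRing

open scoped nonZeroDivisors

variable {A B : Type*} [CommRing A] [CommRing B]

theorem isWeaklyArfRing_iff_dvd :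
    IsWeaklyArfRing A ↔ ∀ x y z : A, x ∈ A⁰ →
      IsIntegralOverSpan x y → IsIntegralOverSpan x z → x ∣ y * z := by
  simp only [IsWeaklyArfRing, isIntegral_mk'_iff_isIntegralOverSpan le_rfl,
    Ideal.mem_span_singleton]

namespace IsWeaklyArfRing

theorem of_leftInverse (hB : IsWeaklyArfRing B) (i : A →+* B) (r : B →+* A)
    (hri : Function.LeftInverse r i) (hi : ∀ x ∈ A⁰, i x ∈ B⁰) : IsWeaklyArfRing A := by
  rw [isWeaklyArfRing_iff_dvd] at hB ⊢
  intro x y z hx hy hz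
  simpa only [map_mul, hri _] using map_dvd r (hB _ _ _ (hi x hx) (hy.map i) (hz.map i))

theorem of_ringEquiv (hA : IsWeaklyArfRing A) (e : A ≃+* B) : IsWeaklyArfRing B :=
  hA.of_leftInverse e.symm.toRingHom e.toRingHom e.apply_symm_apply
    fun _ hx => MulEquivClass.map_nonZeroDivisors e.symm ▸ Submonoid.mem_map_of_mem e.symm hx

theorem of_isLocalization (hA : IsWeaklyArfRing A) {M : Submonoid A} (hM : M ≤ A⁰) [Algebra A B]
    [IsLocalization M B] : IsWeaklyArfRing B := by
  rw [isWeaklyArfRing_iff_dvd] at hA ⊢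
  intro x y z hx hy hz
  obtain ⟨⟨x', s⟩, hx'⟩ := IsLocalization.surj M x
  have hs : IsUnit (algebraMap A B s) := IsLocalization.map_units B s
  have hx'_mem : x' ∈ A⁰ := by
    refine mem_nonZeroDivisors_of_injective (IsLocalization.injective B hM) ?_
    rw [← hx']
    exact mul_mem hx hs.mem_nonZeroDivisors
  have hscale : ∀ w, IsIntegralOverSpan x w →
      IsIntegralOverSpan (algebraMap A B x') (algebraMap A B s * w) := fun w hw => by
    rw [← hx', mul_comm x]
    exact hw.mul_mul_left _
  obtain ⟨t, ht, y', hy', hxy'⟩ := (hscale y hy).exists_mul_of_isLocalization hM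
  obtain ⟨u, hu, z', hz', hxz'⟩ := (hscale z hz).exists_mul_of_isLocalization hM
  have hunit : IsUnit (algebraMap A B t * algebraMap A B u * algebraMap A B s ^ 2) :=
    ((IsLocalization.map_units B ⟨t, ht⟩).mul (IsLocalization.map_units B ⟨u, hu⟩)).mul (hs.pow 2)
  rw [← hunit.dvd_mul_left]
  calc x ∣ algebraMap A B x' := ⟨_, hx'.symm⟩
    _ ∣ algebraMap A B (y' * z') := map_dvd _ (hA x' y' z' hx'_mem hxy' hxz')
    _ = algebraMap A B t * algebraMap A B u * algebraMap A B s ^ 2 * (y * z) := by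
      rw [map_mul, hy', hz']
      ring

end IsWeaklyArfRing

end IsWeaklyArfRing

section HasUnitDifferences

open scoped Polynomial

variable {A B K : Type*} [CommRing A] [CommRing B] [Field K]

/-- `A` contains an infinite set whose elements have pairwise invertible differences, so that
polynomials over `A` of every degree can be interpolated on it without denominators. -/
def HasUnitDifferences (A : Type*) [CommRing A] : Prop :=
  ∃ s : Set A, s.Infinite ∧ s.Pairwise fun a b => IsUnit (a - b)

theorem HasUnitDifferences.map (hA : HasUnitDifferences A) {φ : A →+* B}
    (hφ : Function.Injective φ) : HasUnitDifferences B := by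
  obtain ⟨s, hs, hunit⟩ := hA
  refine ⟨φ '' s, hs.image hφ.injOn, ?_⟩
  rintro _ ⟨a, ha, rfl⟩ _ ⟨b, hb, rfl⟩ hab
  rw [← map_sub]
  exact (hunit ha hb (ne_of_apply_ne φ hab)).map φ

theorem hasUnitDifferences_of_infinite_residueField [IsLocalRing A]
    [Infinite (IsLocalRing.ResidueField A)] : HasUnitDifferences A := by
  obtain ⟨lift, hlift⟩ := (IsLocalRing.residue_surjective (R := A)).hasRightInverse
  refine ⟨Set.range lift, Set.infinite_range_of_injective hlift.injective, ?_⟩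
  rintro _ ⟨a, rfl⟩ _ ⟨b, rfl⟩ hab
  rw [← IsLocalRing.residue_ne_zero_iff_isUnit, map_sub, hlift, hlift, sub_ne_zero]
  exact ne_of_apply_ne lift hab

theorem hasUnitDifferences_localization_of_infinite_quotient (P : Ideal A) [P.IsPrime]
    [Infinite (A ⧸ P)] : HasUnitDifferences (Localization.AtPrime P) :=
  have : Infinite (IsLocalRing.ResidueField (Localization.AtPrime P)) :=
    Infinite.of_injective _ P.injective_algebraMap_quotient_residueField
  hasUnitDifferences_of_infinite_residueField

theorem mem_lifts_of_eval_mem_range {φ : A →+* K} {t : Finset A}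
    (ht : (t : Set A).Pairwise fun a b => IsUnit (a - b)) {q : K[X]} (hdeg : q.degree < t.card)
    (hval : ∀ a ∈ t, q.eval (φ a) ∈ φ.range) : q ∈ Polynomial.lifts φ := by
  classical
  have hinj : Set.InjOn φ t := fun a ha b hb hab => by
    by_contra hne
    exact ((ht ha hb hne).map φ).ne_zero (by rw [map_sub, hab, sub_self])
  rw [Lagrange.eq_interpolate hinj hdeg, Lagrange.interpolate_apply, Polynomial.lifts_iff_liftsRing]
  refine sum_mem fun a ha => mul_mem ?_ (prod_mem fun b hb => ?_)
  · obtain ⟨c, hc⟩ := hval a ha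
    exact ⟨Polynomial.C c, by simp [hc]⟩
  · obtain ⟨u, hu⟩ := ht ha (Finset.mem_of_mem_erase hb) (Finset.ne_of_mem_erase hb).symm
    refine ⟨Polynomial.C (↑u⁻¹ : A) * (Polynomial.X - Polynomial.C b), ?_⟩
    simp [Lagrange.basisDivisor, ← map_sub, ← hu]

namespace IsWeaklyArfRing

theorem polynomial [IsDomain A] (hA : IsWeaklyArfRing A) (hU : HasUnitDifferences A) :
    IsWeaklyArfRing A[X] := by
  rw [isWeaklyArfRing_iff_dvd] at hA ⊢
  intro x y z hx hy hz
  obtain ⟨s, hs, hunit⟩ := hU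
  set φ := algebraMap A (FractionRing A)
  have hφ : Function.Injective φ := IsFractionRing.injective A _
  have hφX : Function.Injective (Polynomial.mapRingHom φ) := Polynomial.map_injective φ hφ
  obtain ⟨q, hq⟩ : x.map φ ∣ y.map φ * z.map φ :=
    ((hy.map (Polynomial.mapRingHom φ)).dvd (map_mem_nonZeroDivisors _ hφX hx)).mul_right _
  have hgood : (s \ {a | x.IsRoot a}).Infinite :=
    hs.sdiff (Polynomial.finite_setOfPred_isRoot (nonZeroDivisors.ne_zero hx))
  obtain ⟨t, hts, htcard⟩ := hgood.exists_subset_card_eq (q.natDegree + 1)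
  have hval : ∀ a ∈ t, q.eval (φ a) ∈ φ.range := fun a ha => by
    have hxa : x.eval a ≠ 0 := (hts ha).2
    obtain ⟨c, hc⟩ := hA _ _ _ (mem_nonZeroDivisors_of_ne_zero hxa)
      (hy.map (Polynomial.evalRingHom a)) (hz.map (Polynomial.evalRingHom a))
    refine ⟨c, mul_left_cancel₀ ((map_ne_zero_iff φ hφ).2 hxa) ?_⟩
    calc φ (x.eval a) * φ c = φ (y.eval a * z.eval a) := by rw [← map_mul]; exact congrArg φ hc.symm
      _ = (y.map φ * z.map φ).eval (φ a) := by simp [Polynomial.eval_map_apply]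
      _ = φ (x.eval a) * q.eval (φ a) := by rw [hq]; simp [Polynomial.eval_map_apply]
  have hdeg : q.degree < t.card := by
    rw [htcard]
    exact Polynomial.degree_le_natDegree.trans_lt (by exact_mod_cast q.natDegree.lt_succ_self)
  obtain ⟨r, hr⟩ := (Polynomial.mem_lifts q).1 <|
    mem_lifts_of_eval_mem_range (hunit.mono fun a ha => (hts ha).1) hdeg hval
  refine ⟨r, hφX ?_⟩
  simp only [Polynomial.coe_mapRingHom, Polynomial.map_mul, hr, hq]

theorem mvPolynomial_of_finite [IsDomain A] (hA : IsWeaklyArfRing A) (hU : HasUnitDifferences A)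
    (σ : Type*) [Finite σ] : IsWeaklyArfRing (MvPolynomial σ A) := by
  refine Finite.induction_empty_option (P := fun σ => IsWeaklyArfRing (MvPolynomial σ A))
    (fun e ih => ?_) ?_ (fun {α} _ ih => ?_) σ
  · exact ih.of_ringEquiv (MvPolynomial.renameEquiv A e).toRingEquiv
  · exact hA.of_ringEquiv (MvPolynomial.isEmptyRingEquiv A PEmpty).symm
  · exact (ih.polynomial (hU.map (MvPolynomial.C_injective α A))).of_ringEquiv
      (MvPolynomial.optionEquivLeft A α).symm.toRingEquiv

theorem mvPolynomial [IsDomain A] (hA : IsWeaklyArfRing A) (hU : HasUnitDifferences A)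
    (σ : Type*) : IsWeaklyArfRing (MvPolynomial σ A) := by
  classical
  rw [isWeaklyArfRing_iff_dvd]
  intro x y z hx hy hz
  obtain ⟨s, hxs, hys, hzs⟩ : ∃ s : Finset σ, x.vars ⊆ s ∧ y.vars ⊆ s ∧ z.vars ⊆ s :=
    ⟨x.vars ∪ y.vars ∪ z.vars, by grind⟩
  have hinj : Function.Injective ((↑) : s → σ) := Subtype.val_injective
  have hlift : ∀ p : MvPolynomial σ A, p.vars ⊆ s → ∃ q : MvPolynomial s A,
      MvPolynomial.rename (↑) q = p := fun p hp =>
    MvPolynomial.exists_rename_eq_of_vars_subset_range p _ hinj (by simpa using hp)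
  obtain ⟨x, rfl⟩ := hlift x hxs
  obtain ⟨y, rfl⟩ := hlift y hys
  obtain ⟨z, rfl⟩ := hlift z hzs
  have hretract : ∀ {p q : MvPolynomial s A}, IsIntegralOverSpan
      (MvPolynomial.rename (↑) p : MvPolynomial σ A) (MvPolynomial.rename (↑) q) →
      IsIntegralOverSpan p q := fun h => by
    simpa using h.map (MvPolynomial.killCompl hinj).toRingHom
  have hx : x ∈ nonZeroDivisors _ :=
    mem_nonZeroDivisors_of_injective (MvPolynomial.rename_injective _ hinj) hx
  rw [← map_mul]
  exact map_dvd _ (isWeaklyArfRing_iff_dvd.1 (hA.mvPolynomial_of_finite hU s) x y z hx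
    (hretract hy) (hretract hz))

end IsWeaklyArfRing

end HasUnitDifferences

section Divisibility

open scoped nonZeroDivisors

variable {A σ : Type*} [CommRing A]

theorem RingDepthGE.exists_mem_nonZeroDivisors_and_dvd_of_dvd_mul [IsLocalRing A]
    (hA : RingDepthGE A 2) :
    ∃ a ∈ IsLocalRing.maximalIdeal A, ∃ b ∈ IsLocalRing.maximalIdeal A,
      a ∈ A⁰ ∧ ∀ c, a ∣ b * c → a ∣ c := by
  obtain ⟨xs, hlen, hmem, hreg⟩ := hA
  obtain ⟨a, b, rfl⟩ := List.length_eq_two.1 hlen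
  have ha := (isSMulRegular_quotient_iff_mem_of_smul_mem _ _).1 (hreg 0 (by simp))
  have hb := (isSMulRegular_quotient_iff_mem_of_smul_mem _ _).1 (hreg 1 (by simp))
  refine ⟨a, hmem a (by simp), b, hmem b (by simp), mem_nonZeroDivisors_iff_left.2 ?_, ?_⟩
  · simpa using ha
  · simpa [Ideal.mem_span_singleton] using hb

theorem dvd_of_dvd_mul_of_dvd_mul {a b h w : A} (ha : a ∈ A⁰) (hab : ∀ c, a ∣ b * c → a ∣ c)
    (hh : h ∈ A⁰) (haw : h ∣ a * w) (hbw : h ∣ b * w) : h ∣ w := by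
  obtain ⟨d, hd⟩ := haw
  obtain ⟨e, he⟩ := hbw
  have hde : b * d = a * e := by
    rw [← mul_cancel_left_mem_nonZeroDivisors hh]
    linear_combination a * he - b * hd
  obtain ⟨d', rfl⟩ := hab d ⟨e, hde⟩
  refine ⟨d', ?_⟩
  rw [← mul_cancel_left_mem_nonZeroDivisors ha]
  linear_combination hd

theorem RingDepthGE.mvPolynomial_dvd_of_forall_dvd_smul [IsLocalRing A] (hA : RingDepthGE A 2)
    {h w : MvPolynomial σ A} (hh : h ∈ (MvPolynomial σ A)⁰)
    (hw : ∀ a ∈ IsLocalRing.maximalIdeal A, h ∣ a • w) : h ∣ w := by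
  obtain ⟨a, ha, b, hb, ha0, hab⟩ := hA.exists_mem_nonZeroDivisors_and_dvd_of_dvd_mul
  simp only [MvPolynomial.smul_eq_C_mul] at hw
  refine dvd_of_dvd_mul_of_dvd_mul ?_ (fun c hc => ?_) hh (hw a ha) (hw b hb)
  · refine mem_nonZeroDivisors_iff_left.2 fun c hc => MvPolynomial.ext _ _ fun m => ?_
    refine mem_nonZeroDivisors_iff_left.1 ha0 _ ?_
    rw [← MvPolynomial.coeff_C_mul, hc, MvPolynomial.coeff_zero]
  · simp only [MvPolynomial.C_dvd_iff_dvd_coeff, MvPolynomial.coeff_C_mul] at hc ⊢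
    exact fun m => hab _ (hc m)

theorem exists_dvd_smul_of_map_dvd_map (M : Submonoid A) (B : Type*) [CommRing B] [Algebra A B]
    [IsLocalization M B] {h v : MvPolynomial σ A}
    (hv : MvPolynomial.map (algebraMap A B) h ∣ MvPolynomial.map (algebraMap A B) v) :
    ∃ s ∈ M, h ∣ s • v := by
  let _ : Algebra (MvPolynomial σ A) (MvPolynomial σ B) := MvPolynomial.algebraMvPolynomial
  have hmem : algebraMap _ (MvPolynomial σ B) v ∈ (Ideal.span {h}).map (algebraMap _ _) := by
    rwa [Ideal.map_span, Set.image_singleton, Ideal.mem_span_singleton]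
  obtain ⟨_, ⟨s, hs, rfl⟩, hsv⟩ :=
    (IsLocalization.algebraMap_mem_map_algebraMap_iff (M.map MvPolynomial.C) _ _ _).1 hmem
  exact ⟨s, hs, by rwa [MvPolynomial.smul_eq_C_mul, ← Ideal.mem_span_singleton]⟩

theorem exists_isPrime_mem_iff_dvd_smul [IsNoetherianRing A] {S : Type*} [CommRing S] [Algebra A S]
    {h v : S} (hv : ¬ h ∣ v) :
    ∃ (P : Ideal A) (w : S), P.IsPrime ∧ (∀ a, a ∈ P ↔ h ∣ a • w) ∧ ∀ a : A, h ∣ a • v → a ∈ P := by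
  have hcolon : ∀ (a : A) (w : S),
      a ∈ (⊥ : Submodule A (S ⧸ Ideal.span {h})).colon {Ideal.Quotient.mk _ w} ↔ h ∣ a • w :=
    fun a w => by
      rw [Submodule.mem_colon_singleton, Submodule.mem_bot, ← Ideal.mem_span_singleton,
        ← Ideal.Quotient.eq_zero_iff_mem]
      rfl
  obtain ⟨P, hP, hvP⟩ := exists_le_isAssociatedPrime_of_isNoetherianRing A
    (Ideal.Quotient.mk (Ideal.span {h}) v)
    (by rwa [Ne, Ideal.Quotient.eq_zero_iff_mem, Ideal.mem_span_singleton])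
  obtain ⟨hprime, w, rfl⟩ := isAssociatedPrime_iff.1 hP
  obtain ⟨w, rfl⟩ := Ideal.Quotient.mk_surjective w
  exact ⟨_, w, hprime, fun a => hcolon a w, fun a ha => hvP ((hcolon a v).2 ha)⟩

theorem not_ringDepthGE_two_of_mem_iff_dvd_smul [IsDomain A] {P : Ideal A} [P.IsPrime]
    {h w : MvPolynomial σ A} (hh : h ≠ 0) (hP : ∀ a, a ∈ P ↔ h ∣ a • w) :
    ¬ RingDepthGE (Localization.AtPrime P) 2 := by
  intro hdepth
  set B := Localization.AtPrime P
  set φ : MvPolynomial σ A →+* MvPolynomial σ B := MvPolynomial.map (algebraMap A B)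
  have hφ : Function.Injective φ := MvPolynomial.map_injective _ <|
    IsLocalization.injective B P.primeCompl_le_nonZeroDivisors
  have hmax : ∀ b ∈ IsLocalRing.maximalIdeal B, φ h ∣ b • φ w := fun b hb => by
    obtain ⟨⟨a, s⟩, ha⟩ := IsLocalization.surj P.primeCompl b
    have haP : a ∈ P := by
      rw [← IsLocalization.AtPrime.to_map_mem_maximal_iff B P, ← ha]
      exact Ideal.mul_mem_right _ _ hb
    have hs : IsUnit (MvPolynomial.C (σ := σ) (algebraMap A B s)) :=
      (IsLocalization.map_units B s).map MvPolynomial.C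
    rw [← hs.dvd_mul_left, ← MvPolynomial.smul_eq_C_mul, smul_smul, mul_comm, ha]
    rw [MvPolynomial.smul_eq_C_mul, ← MvPolynomial.map_C, ← map_mul, ← MvPolynomial.smul_eq_C_mul]
    exact map_dvd φ ((hP a).1 haP)
  have hdvd : φ h ∣ φ w := hdepth.mvPolynomial_dvd_of_forall_dvd_smul
    (mem_nonZeroDivisors_of_ne_zero ((map_ne_zero_iff φ hφ).2 hh)) hmax
  obtain ⟨s, hs, hsw⟩ := exists_dvd_smul_of_map_dvd_map P.primeCompl B hdvd
  exact hs ((hP s).2 hsw)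

theorem mvPolynomial_dvd_of_forall_isPrime [IsDomain A] [IsNoetherianRing A]
    {h v : MvPolynomial σ A} (hh : h ≠ 0)
    (hP : ∀ (P : Ideal A) [P.IsPrime], RingDepthGE (Localization.AtPrime P) 2 ∨
      MvPolynomial.map (algebraMap A (Localization.AtPrime P)) h ∣
        MvPolynomial.map (algebraMap A (Localization.AtPrime P)) v) :
    h ∣ v := by
  by_contra hv
  obtain ⟨P, w, _, hPw, hPv⟩ := exists_isPrime_mem_iff_dvd_smul (A := A) hv
  obtain ⟨s, hs, hsv⟩ := exists_dvd_smul_of_map_dvd_map P.primeCompl (Localization.AtPrime P) <|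
    (hP P).resolve_left (not_ringDepthGE_two_of_mem_iff_dvd_smul hh hPw)
  exact hs (hPv s hsv)

end Divisibility

section SerreSCondition

variable {A : Type*} [CommRing A]

theorem infinite_quotient_of_isField_subring {F : Subring A} (hF : IsField F) [Infinite F]
    {I : Ideal A} (hI : I ≠ ⊤) : Infinite (A ⧸ I) := by
  let _ := hF.toField
  have := Ideal.Quotient.nontrivial_iff.2 hI
  exact Infinite.of_injective _ ((Ideal.Quotient.mk I).comp F.subtype).injective

theorem SerreSCondition.ringDepthGE_two_of_finite_quotient (hS2 : SerreSCondition A 2)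
    (hyp : (∃ F : Subring A, IsField F ∧ Infinite F) ∨
      (∀ (M : Ideal A) [M.IsMaximal],
        (2 : WithBot (WithTop ℕ)) ≤ ringKrullDim (Localization.AtPrime M)))
    (M : Ideal A) [hM : M.IsMaximal] [Finite (A ⧸ M)] : RingDepthGE (Localization.AtPrime M) 2 := by
  rcases hyp with ⟨F, hF, _⟩ | hdim
  · have := infinite_quotient_of_isField_subring hF hM.ne_top
    exact (not_finite (A ⧸ M)).elim
  · exact hS2 M 2 le_rfl (hdim M)

end SerreSCondition

theorem weaklyArf_iff_polynomials_general (A : Type*) [CommRing A] [IsDomain A] [IsNoetherianRing A]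
    (hdepth : ∀ (M : Ideal A) [M.IsMaximal] [Finite (A ⧸ M)],
      RingDepthGE (Localization.AtPrime M) 2) (σ : Type*) :
    IsWeaklyArfRing A ↔ IsWeaklyArfRing (MvPolynomial σ A) := by
  refine ⟨fun hA => isWeaklyArfRing_iff_dvd.2 fun x y z hx hy hz => ?_, fun h => ?_⟩
  · refine mvPolynomial_dvd_of_forall_isPrime (nonZeroDivisors.ne_zero hx) fun P _ => ?_
    rcases finite_or_infinite (A ⧸ P) with _ | _
    · have : P.IsMaximal := Ideal.Quotient.maximal_of_isField P (Finite.isField_of_domain (A ⧸ P))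
      exact .inl (hdepth P)
    · have hlocal := (hA.of_isLocalization P.primeCompl_le_nonZeroDivisors).mvPolynomial
        (hasUnitDifferences_localization_of_infinite_quotient P) σ
      have hinj := MvPolynomial.map_injective (σ := σ) _ <|
        IsLocalization.injective (Localization.AtPrime P) P.primeCompl_le_nonZeroDivisors
      rw [map_mul]
      exact .inr <| isWeaklyArfRing_iff_dvd.1 hlocal _ _ _ (map_mem_nonZeroDivisors _ hinj hx)
        (hy.map _) (hz.map _)
  · exact h.of_leftInverse MvPolynomial.C MvPolynomial.constantCoeff
      (MvPolynomial.constantCoeff_C σ)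
      fun _ => map_mem_nonZeroDivisors _ (MvPolynomial.C_injective σ A)

/-- Let `A` be a Noetherian domain with `(S₂)` which either contains an infinite field
or has `ht M ≥ 2` for every maximal ideal `M`.  Then `A` is weakly Arf iff the
polynomial ring `A[X₁, …, Xₙ]` is weakly Arf for every `n ≥ 1`. -/
theorem weaklyArf_iff_polynomials (A : Type*) [CommRing A] [IsDomain A]
    [IsNoetherianRing A] (hS2 : SerreSCondition A 2)
    (hyp : (∃ F : Subring A, IsField F ∧ Infinite F) ∨
      (∀ (M : Ideal A) [M.IsMaximal],
        (2 : WithBot (WithTop ℕ)) ≤ ringKrullDim (Localization.AtPrime M))) :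
    IsWeaklyArfRing A ↔
      ∀ n : ℕ, 1 ≤ n → IsWeaklyArfRing (MvPolynomial (Fin n) A) := by
  have hdepth := hS2.ringDepthGE_two_of_finite_quotient hyp
  exact ⟨fun hA n _ => (weaklyArf_iff_polynomials_general A hdepth (Fin n)).1 hA,
    fun h => (weaklyArf_iff_polynomials_general A hdepth (Fin 1)).2 (h 1 le_rfl)⟩
end
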